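/- Let Q be the ground state on ℝ^N and let ρ be the unique radial Schwartz solution of L₊ρ = |x|²Q. Then there exists μ > 0 such that for every radially symmetric u ∈ H¹(ℝ^N; ℂ): (L₊ Re u, Re u)₂ + (L₋ Im u, Im u)₂ ≥ μ‖u‖_{H¹}² − (1/μ)·((Re u, Q)₂² + (Re u, |x|²Q)₂² + (Im u, ρ)₂²), where (L₊v, v)₂ = ∫(|∇v|² + v² − (1+4/N)Q^{4/N}v²)dx and (L₋v, v)₂ = ∫(|∇v|² + v² − Q^{4/N}v²)dx for real-valued v. -/

import Mathlib

open MeasureTheory Filter Complex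

noncomputable section

/-- The Laplacian `Δf = ∑ᵢ ∂ᵢ²f` on `ℝ^N`. -/
def lapl {N : ℕ} {F : Type*} [NormedAddCommGroup F] [NormedSpace ℝ F]
    (f : EuclideanSpace ℝ (Fin N) → F) (x : EuclideanSpace ℝ (Fin N)) : F :=
  ∑ i : Fin N, fderiv ℝ (fun y => fderiv ℝ f y (EuclideanSpace.single i (1:ℝ))) x
    (EuclideanSpace.single i (1:ℝ))

/-- `|∇f(x)|² = ∑ᵢ |∂ᵢf(x)|²`. -/
def gradSq {N : ℕ} {F : Type*} [NormedAddCommGroup F] [NormedSpace ℝ F]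
    (f : EuclideanSpace ℝ (Fin N) → F) (x : EuclideanSpace ℝ (Fin N)) : ℝ :=
  ∑ i : Fin N, ‖fderiv ℝ f x (EuclideanSpace.single i (1:ℝ))‖ ^ 2

/-- `Q` is the ground state: a smooth, positive, radial solution of
`ΔQ − Q + Q^{1+4/N} = 0` with exponential decay. -/
def IsGroundState (N : ℕ) (Q : EuclideanSpace ℝ (Fin N) → ℝ) : Prop :=
  ContDiff ℝ (⊤ : ℕ∞) Q ∧ (∀ x, 0 < Q x) ∧ (∀ x y, ‖x‖ = ‖y‖ → Q x = Q y) ∧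
  (∀ x, lapl Q x - Q x + Q x ^ ((1:ℝ) + 4 / N) = 0) ∧
  ∃ C c : ℝ, 0 < C ∧ 0 < c ∧ ∀ x, Q x ≤ C * Real.exp (-c * ‖x‖)

/-!
In radial coordinates both quadratic forms become one-dimensional, with weight `r ^ (N - 1)`. A
Pohozaev identity shows that `-r q'/q` is strictly increasing for the profile `q` of `Q`, so a
rescaling generator `α q + r q'` has at most one zero. For a suitable `α` it has a zero `s`, and
`L₊(α q + r q')` changes sign at `s` together with it; Jacobi's criterion then makes `L₊`, hence
also `L₋ ≥ L₊`, positive on functions vanishing at `s`, a subspace of codimension one.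

With `Λ = (N/2) Q + x·∇Q` one has `L₊Λ = -2Q`, so `(L₊n, n) < 0` for `n = Λ + tρ` with small
`t > 0`, while `L₊n` lies in the span of `Q` and `|x|²Q`. Positivity in codimension one therefore
passes to the orthogonal complement of these two functions. Since `L₋Q = 0` and `(ρ, Q) ≠ 0`, it
passes for `L₋` to the orthogonal complement of `ρ`.
-/

section RadialAnalysis

open Set Topology Asymptotics

/-! ### Exponential decay and radial integration -/

/-- Exponential decay at `+∞`, at an unspecified rate. -/
def ExpDecay (f : ℝ → ℝ) : Prop :=
  ∃ c > 0, f =O[atTop] fun r => Real.exp (-c * r)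

lemma isBigO_exp_neg_of_le {b c : ℝ} (h : b ≤ c) :
    (fun r => Real.exp (-c * r)) =O[atTop] fun r => Real.exp (-b * r) := by
  refine IsBigO.of_bound 1 ?_
  filter_upwards [eventually_ge_atTop 0] with r hr
  rw [one_mul, Real.norm_of_nonneg (Real.exp_nonneg _), Real.norm_of_nonneg (Real.exp_nonneg _)]
  gcongr

namespace ExpDecay

variable {f g : ℝ → ℝ}

lemma of_isBigO (hg : ExpDecay g) (h : f =O[atTop] g) : ExpDecay f :=
  let ⟨c, hc, hgc⟩ := hg
  ⟨c, hc, h.trans hgc⟩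

lemma add (hf : ExpDecay f) (hg : ExpDecay g) : ExpDecay fun r => f r + g r := by
  obtain ⟨b, hb, hfb⟩ := hf
  obtain ⟨c, hc, hgc⟩ := hg
  exact ⟨min b c, lt_min hb hc, (hfb.trans (isBigO_exp_neg_of_le (min_le_left b c))).add
    (hgc.trans (isBigO_exp_neg_of_le (min_le_right b c)))⟩

lemma const_mul (hf : ExpDecay f) (a : ℝ) : ExpDecay fun r => a * f r :=
  hf.of_isBigO (isBigO_const_mul_self a f atTop)

lemma mul_isBigO_one (hf : ExpDecay f) (hg : g =O[atTop] (1 : ℝ → ℝ)) :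
    ExpDecay fun r => f r * g r :=
  hf.of_isBigO (((isBigO_refl f atTop).mul hg).congr_right fun _ => mul_one _)

lemma pow_mul (hf : ExpDecay f) (k : ℕ) : ExpDecay fun r => r ^ k * f r := by
  obtain ⟨c, hc, hfc⟩ := hf
  refine ⟨c / 2, half_pos hc, ?_⟩
  refine ((isLittleO_pow_exp_pos_mul_atTop k (half_pos hc)).isBigO.mul hfc).congr_right fun r => ?_
  rw [← Real.exp_add]
  ring_nf

lemma tendsto_zero (hf : ExpDecay f) : Tendsto f atTop (𝓝 0) := by
  obtain ⟨c, hc, hfc⟩ := hf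
  exact hfc.trans_tendsto <| Real.tendsto_exp_atBot.comp <|
    tendsto_id.const_mul_atTop_of_neg (neg_neg_of_pos hc)

end ExpDecay

lemma hasDerivAt_pow_of_pos (d : ℕ) {r : ℝ} (hr : 0 < r) :
    HasDerivAt (fun t : ℝ => t ^ d) (d / r * r ^ d) r := by
  refine (hasDerivAt_pow d r).congr_deriv ?_
  rcases d with _ | d
  · simp only [Nat.cast_zero, zero_mul, zero_div]
  · rw [Nat.add_sub_cancel]
    field_simp
    exact (pow_succ r d).symm

/-- The measure `r ^ d dr` on `(0, ∞)`, the radial part of Lebesgue measure on `ℝ^(d+1)`. -/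
def radialMeasure (d : ℕ) : Measure ℝ :=
  (volume.restrict (Ioi 0)).withDensity fun r => ((r ^ d).toNNReal : ENNReal)

section RadialMeasure

variable {d : ℕ} {f g : ℝ → ℝ}

lemma measurable_toNNReal_pow (d : ℕ) : Measurable fun r : ℝ => (r ^ d).toNNReal :=
  (measurable_id.pow_const d).real_toNNReal

lemma toNNReal_pow_smul {r : ℝ} (hr : 0 ≤ r) (a : ℝ) : (r ^ d).toNNReal • a = r ^ d * a := by
  rw [NNReal.smul_def, Real.coe_toNNReal _ (pow_nonneg hr d), smul_eq_mul]

lemma integrable_radialMeasure_iff :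
    Integrable f (radialMeasure d) ↔ IntegrableOn (fun r => r ^ d * f r) (Ioi 0) :=
  (integrable_withDensity_iff_integrable_smul (measurable_toNNReal_pow d)).trans <|
    integrableOn_congr_fun (fun _ hr => toNNReal_pow_smul (le_of_lt hr) _) measurableSet_Ioi

lemma integral_radialMeasure (d : ℕ) (f : ℝ → ℝ) :
    ∫ r, f r ∂radialMeasure d = ∫ r in Ioi 0, r ^ d * f r :=
  (integral_withDensity_eq_integral_smul (measurable_toNNReal_pow d) f).trans <|
    setIntegral_congr_fun measurableSet_Ioi fun _ hr => toNNReal_pow_smul (le_of_lt hr) _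

lemma ae_radialMeasure_pos (d : ℕ) : ∀ᵐ r ∂radialMeasure d, 0 < r :=
  (withDensity_absolutelyContinuous _ _).ae_le (ae_restrict_mem measurableSet_Ioi)

lemma ExpDecay.memLp_two (hf : ExpDecay f) (hc : Continuous f) (d : ℕ) :
    MemLp f 2 (radialMeasure d) := by
  rw [memLp_two_iff_integrable_sq hc.aestronglyMeasurable, integrable_radialMeasure_iff]
  obtain ⟨c, hc0, hO⟩ := hf.pow_mul d
  refine integrable_of_isBigO_exp_neg hc0 (by fun_prop) ?_
  refine (hO.mul (hf.tendsto_zero.isBigO_one ℝ)).congr (fun r => ?_) fun r => ?_ <;> ring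

lemma integral_radialMeasure_pos (hf : ∀ r, 0 < r → 0 < f r)
    (hint : Integrable f (radialMeasure d)) : 0 < ∫ r, f r ∂radialMeasure d := by
  have hpos : ∀ r ∈ Ioi (0 : ℝ), 0 < r ^ d * f r := fun r hr => mul_pos (pow_pos hr d) (hf r hr)
  rw [integral_radialMeasure, setIntegral_pos_iff_support_of_nonneg_ae
    ((ae_restrict_mem measurableSet_Ioi).mono fun r hr => (hpos r hr).le)
    (integrable_radialMeasure_iff.1 hint),
    inter_eq_right.2 (show Ioi (0 : ℝ) ⊆ Function.support _ from fun r hr => (hpos r hr).ne')]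
  simp only [Real.volume_Ioi, ENNReal.zero_lt_top]

lemma tendsto_pow_mul_zero (hf : Integrable f (radialMeasure d))
    (hg : Integrable g (radialMeasure d))
    (hderiv : ∀ r, 0 < r → HasDerivAt (fun t => t ^ d * g t) (r ^ d * f r) r) :
    Tendsto (fun r => r ^ d * g r) atTop (𝓝 0) :=
  tendsto_zero_of_hasDerivAt_of_integrableOn_Ioi hderiv (integrable_radialMeasure_iff.1 hf)
    (integrable_radialMeasure_iff.1 hg)

lemma integral_radialMeasure_eq_zero (hf : Integrable f (radialMeasure d))
    (hg : Integrable g (radialMeasure d)) (hc : Continuous g) (h0 : g 0 = 0)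
    (hderiv : ∀ r, 0 < r → HasDerivAt (fun t => t ^ d * g t) (r ^ d * f r) r) :
    ∫ r, f r ∂radialMeasure d = 0 := by
  rw [integral_radialMeasure, integral_Ioi_of_hasDerivAt_of_tendsto
    (Continuous.continuousWithinAt (by fun_prop)) hderiv (integrable_radialMeasure_iff.1 hf)
    (tendsto_pow_mul_zero hf hg hderiv), h0, mul_zero, sub_zero]

end RadialMeasure

/-! ### Quadratic forms on radial profiles -/

/-- The radial profiles of `H¹(ℝ^(d+1))`, encoded as pairs of a continuous function on the line and
its derivative on `(0, ∞)`. -/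
def radialH1 (d : ℕ) : Submodule ℝ ((ℝ → ℝ) × (ℝ → ℝ)) where
  carrier := {g | Continuous g.1 ∧ (∀ r, 0 < r → HasDerivAt g.1 (g.2 r) r) ∧
    MemLp g.1 2 (radialMeasure d) ∧ MemLp g.2 2 (radialMeasure d)}
  add_mem' hg hh := ⟨hg.1.add hh.1, fun r hr => (hg.2.1 r hr).add (hh.2.1 r hr),
    hg.2.2.1.add hh.2.2.1, hg.2.2.2.add hh.2.2.2⟩
  zero_mem' := ⟨continuous_zero, fun r _ => hasDerivAt_const r 0, MemLp.zero, MemLp.zero⟩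
  smul_mem' a _ hg := ⟨hg.1.const_smul a, fun r hr => (hg.2.1 r hr).const_smul a,
    hg.2.2.1.const_smul a, hg.2.2.2.const_smul a⟩

/-- `n'` is the derivative of the profile of a radial function on `ℝ^(d+1)` whose Laplacian has the
profile `F`. -/
structure HasRadialLaplacian (d : ℕ) (n' F : ℝ → ℝ) : Prop where
  continuous : Continuous n'
  map_zero : n' 0 = 0
  hasDerivAt : ∀ r, 0 < r → HasDerivAt n' (F r - d / r * n' r) r

lemma HasRadialLaplacian.hasDerivAt_flux {d : ℕ} {n' F : ℝ → ℝ} (h : HasRadialLaplacian d n' F)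
    {r : ℝ} (hr : 0 < r) : HasDerivAt (fun t => t ^ d * n' t) (r ^ d * F r) r :=
  ((hasDerivAt_pow_of_pos d hr).mul (h.hasDerivAt r hr)).congr_deriv (by ring)

namespace radialH1

variable {d : ℕ} (g h : radialH1 d)

lemma continuous : Continuous g.1.1 := g.2.1

lemma hasDerivAt {r : ℝ} (hr : 0 < r) : HasDerivAt g.1.1 (g.1.2 r) r := g.2.2.1 r hr

lemma memLp : MemLp g.1.1 2 (radialMeasure d) := g.2.2.2.1

lemma memLp_deriv : MemLp g.1.2 2 (radialMeasure d) := g.2.2.2.2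

/-- Evaluation of a radial profile at a point. -/
def eval (d : ℕ) (s : ℝ) : radialH1 d →ₗ[ℝ] ℝ :=
  LinearMap.proj s ∘ₗ LinearMap.fst ℝ (ℝ → ℝ) (ℝ → ℝ) ∘ₗ (radialH1 d).subtype

lemma pow_mul_mem {g g' : ℝ → ℝ} (hg : Continuous g) (hg' : Continuous g')
    (hderiv : ∀ r, 0 < r → HasDerivAt g (g' r) r) (hexp : ExpDecay g) (hexp' : ExpDecay g')
    (k : ℕ) :
    (fun r => r ^ k * g r, fun r => k * r ^ (k - 1) * g r + r ^ k * g' r) ∈ radialH1 d := by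
  refine ⟨by fun_prop, fun r hr => (hasDerivAt_pow k r).mul (hderiv r hr),
    (hexp.pow_mul k).memLp_two (by fun_prop) d, ?_⟩
  refine ExpDecay.memLp_two ?_ (by fun_prop) d
  simpa only [mul_assoc] using ((hexp.pow_mul (k - 1)).const_mul k).add (hexp'.pow_mul k)

lemma integrable_mul : Integrable (fun r => g.1.1 r * h.1.1 r) (radialMeasure d) :=
  (memLp g).integrable_mul (memLp h)

lemma integrable_energy (a : ℝ) {V : ℝ → ℝ} (hV : MemLp V ⊤ (radialMeasure d)) :
    Integrable (fun r => a * (g.1.2 r * h.1.2 r) + V r * (g.1.1 r * h.1.1 r)) (radialMeasure d) :=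
  (((memLp_deriv g).integrable_mul (memLp_deriv h)).const_mul a).add <|
    memLp_one_iff_integrable.1 <|
      (memLp_one_iff_integrable.2 (integrable_mul g h)).mul hV

lemma hasDerivAt_pow_mul_sq {r : ℝ} (hr : 0 < r) :
    HasDerivAt (fun t => t ^ d * g.1.1 t ^ 2)
      (2 * (r ^ d * (g.1.1 r * g.1.2 r)) + d / r * (r ^ d * g.1.1 r ^ 2)) r := by
  refine ((hasDerivAt_pow_of_pos d hr).mul ((hasDerivAt g hr).pow 2)).congr_deriv ?_
  simp only [Pi.pow_apply, Nat.cast_ofNat, Nat.reduceSub, pow_one]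
  ring

lemma tendsto_pow_mul_sq_zero : Tendsto (fun r => r ^ d * g.1.1 r ^ 2) atTop (𝓝 0) := by
  have hsub : Ioi (1 : ℝ) ⊆ Ioi 0 := Ioi_subset_Ioi zero_le_one
  have hsq := (integrable_radialMeasure_iff.1 (memLp g).integrable_sq).mono_set hsub
  have hmul := (integrable_radialMeasure_iff.1
    ((memLp g).integrable_mul (memLp_deriv g))).mono_set hsub
  refine tendsto_zero_of_hasDerivAt_of_integrableOn_Ioi (a := 1)
    (fun r hr => hasDerivAt_pow_mul_sq g (hsub hr)) ((hmul.const_mul 2).add ?_) hsq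
  have hg : Measurable g.1.1 := (radialH1.continuous g).measurable
  refine (hsq.const_mul (d : ℝ)).mono' (by fun_prop) ?_
  filter_upwards [ae_restrict_mem measurableSet_Ioi] with r (hr : 1 < r)
  rw [Real.norm_of_nonneg (by positivity)]
  gcongr
  exact div_le_self (Nat.cast_nonneg d) hr.le

end radialH1

/-- The bilinear form `∫ (a g'h' + V g h) r ^ d dr` on radial profiles. -/
def energyForm {d : ℕ} (a : ℝ) {V : ℝ → ℝ} (hV : MemLp V ⊤ (radialMeasure d)) :
    LinearMap.BilinForm ℝ (radialH1 d) :=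
  LinearMap.mk₂ ℝ
    (fun g h => ∫ r, (a * (g.1.2 r * h.1.2 r) + V r * (g.1.1 r * h.1.1 r)) ∂radialMeasure d)
    (fun f g h => by
      rw [← integral_add (radialH1.integrable_energy f h a hV)
        (radialH1.integrable_energy g h a hV)]
      exact integral_congr_ae (ae_of_all _ fun r => by simp; ring))
    (fun c g h => by
      rw [smul_eq_mul, ← integral_const_mul]
      exact integral_congr_ae (ae_of_all _ fun r => by simp; ring))
    (fun f g h => by
      rw [← integral_add (radialH1.integrable_energy f g a hV)
        (radialH1.integrable_energy f h a hV)]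
      exact integral_congr_ae (ae_of_all _ fun r => by simp; ring))
    (fun c g h => by
      rw [smul_eq_mul, ← integral_const_mul]
      exact integral_congr_ae (ae_of_all _ fun r => by simp; ring))

/-- The `L²` inner product of radial profiles. -/
def l2Form (d : ℕ) : LinearMap.BilinForm ℝ (radialH1 d) := energyForm 0 (memLp_top_const (1 : ℝ))

/-- The `H¹` inner product of radial profiles. -/
def h1Form (d : ℕ) : LinearMap.BilinForm ℝ (radialH1 d) := energyForm 1 (memLp_top_const (1 : ℝ))

section EnergyForm

variable {d : ℕ} {a : ℝ} {V W : ℝ → ℝ} (hV : MemLp V ⊤ (radialMeasure d))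
  (hW : MemLp W ⊤ (radialMeasure d))

lemma energyForm_apply (g h : radialH1 d) : energyForm a hV g h =
    ∫ r, (a * (g.1.2 r * h.1.2 r) + V r * (g.1.1 r * h.1.1 r)) ∂radialMeasure d :=
  rfl

lemma l2Form_apply (g h : radialH1 d) :
    l2Form d g h = ∫ r, g.1.1 r * h.1.1 r ∂radialMeasure d := by
  simp only [l2Form, energyForm_apply, zero_mul, zero_add, one_mul]

lemma isSymm_energyForm : (energyForm a hV).IsSymm :=
  ⟨fun g h => by simp only [energyForm_apply, mul_comm]⟩

lemma isSymm_l2Form (d : ℕ) : (l2Form d).IsSymm := isSymm_energyForm _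

lemma l2Form_self_nonneg (g : radialH1 d) : 0 ≤ l2Form d g g := by
  rw [l2Form_apply]
  exact integral_nonneg fun r => mul_self_nonneg _

lemma energyForm_self_mono (hVW : ∀ r, 0 < r → V r ≤ W r) (g : radialH1 d) :
    energyForm a hV g g ≤ energyForm a hW g g := by
  refine integral_mono_ae (radialH1.integrable_energy g g a hV)
    (radialH1.integrable_energy g g a hW) ?_
  filter_upwards [ae_radialMeasure_pos d] with r hr
  gcongr
  exacts [mul_self_nonneg _, hVW r hr]

lemma h1Form_self_le {C : ℝ} (hVC : ∀ r, 0 < r → 1 ≤ V r + C) (g : radialH1 d) :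
    h1Form d g g ≤ energyForm 1 hV g g + C * l2Form d g g := by
  have hsum : MemLp (fun r => V r + C) ⊤ (radialMeasure d) := hV.add (memLp_top_const C)
  refine (energyForm_self_mono _ hsum hVC g).trans_eq ?_
  rw [l2Form_apply, ← integral_const_mul, energyForm_apply, energyForm_apply,
    ← integral_add (radialH1.integrable_energy g g 1 hV)
      ((radialH1.integrable_mul g g).const_mul C)]
  exact integral_congr_ae (ae_of_all _ fun r => by ring)

/-- Green's identity, as the hypothesis says `-Δn + V n = f`. -/
lemma energyForm_eq_l2Form {n f : radialH1 d}
    (hn : HasRadialLaplacian d n.1.2 fun r => V r * n.1.1 r - f.1.1 r) (g : radialH1 d) :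
    energyForm 1 hV g n = l2Form d g f := by
  have hgf := radialH1.integrable_mul g f
  have hgn := radialH1.integrable_energy g n 1 hV
  rw [← sub_eq_zero, l2Form_apply, energyForm_apply, ← integral_sub hgn hgf]
  refine integral_radialMeasure_eq_zero (g := fun r => g.1.1 r * n.1.2 r) (hgn.sub hgf)
    ((radialH1.memLp g).integrable_mul (radialH1.memLp_deriv n))
    ((radialH1.continuous g).mul hn.continuous) (by rw [hn.map_zero, mul_zero]) fun r hr => ?_
  have hprod := (radialH1.hasDerivAt g hr).mul (hn.hasDerivAt_flux hr)
  refine (hprod.congr_deriv ?_).congr_of_eventuallyEq (.of_forall fun t => ?_)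
  · ring
  · simp only [Pi.mul_apply]
    ring

end EnergyForm

/-! ### Forms that are positive in codimension one -/

section ConstrainedCoercivity

variable {E : Type*} [AddCommGroup E] [Module ℝ E] {B S : LinearMap.BilinForm ℝ E}
  {δ : E →ₗ[ℝ] ℝ} {c : ℝ} {n : E}

lemma exists_mem_ker_add_smul (hn : δ n ≠ 0) (g : E) :
    ∃ (k : E) (a : ℝ), δ k = 0 ∧ g = k + a • n := by
  refine ⟨g - (δ g / δ n) • n, δ g / δ n, ?_, (sub_add_cancel g _).symm⟩
  rw [map_sub, map_smul, smul_eq_mul, div_mul_cancel₀ _ hn, sub_self]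

lemma add_smul_apply_self_le (hS : ∀ g, 0 ≤ S g g) (k n : E) (a : ℝ) :
    S (k + a • n) (k + a • n) ≤ 2 * S k k + 2 * a ^ 2 * S n n := by
  have h := hS (k - a • n)
  simp only [map_add, map_sub, map_smul, LinearMap.add_apply, LinearMap.sub_apply,
    LinearMap.smul_apply, smul_eq_mul] at h ⊢
  linarith

lemma exists_coercive_of_apply_self_neg (hB : B.IsSymm) (hS : ∀ g, 0 ≤ S g g) (hc : 0 < c)
    (hker : ∀ k, δ k = 0 → c * S k k ≤ B k k) (hn : B n n < 0) :
    ∃ c' > 0, ∃ M ≥ 0, ∀ g, c' * S g g ≤ B g g + M * B g n ^ 2 := by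
  have hδ : δ n ≠ 0 := fun h => absurd ((mul_nonneg hc.le (hS n)).trans (hker n h)) hn.not_ge
  obtain ⟨m, hm⟩ : ∃ m, m = -B n n := ⟨_, rfl⟩
  have hm0 : 0 < m := by linarith
  have hSn := hS n
  refine ⟨min (c / 2) (m / (4 * (S n n + 1))), by positivity, 2 / m, by positivity, fun g => ?_⟩
  obtain ⟨k, a, hk, rfl⟩ := exists_mem_ker_add_smul hδ g
  obtain ⟨J, hJ⟩ : ∃ J, J = B (k + a • n) n := ⟨_, rfl⟩
  have hexpand : B (k + a • n) (k + a • n) = B k k + 2 * a * J + a ^ 2 * m := by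
    have hsymm : B n k = B k n := hB.eq n k
    simp only [hJ, hm, map_add, map_smul, LinearMap.add_apply, LinearMap.smul_apply, smul_eq_mul,
      hsymm]
    ring
  have hyoung : -(a ^ 2 * m / 2) ≤ 2 * a * J + 2 / m * J ^ 2 := by
    have hnonneg : 0 ≤ (a * m + 2 * J) ^ 2 / (2 * m) := by positivity
    have hsquare : (a * m + 2 * J) ^ 2 / (2 * m) = a ^ 2 * m / 2 + 2 * a * J + 2 / m * J ^ 2 := by
      field_simp
      ring
    linarith
  have hle : m / (4 * (S n n + 1)) * (2 * a ^ 2 * S n n) ≤ a ^ 2 * m / 2 := by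
    rw [div_mul_eq_mul_div, div_le_div_iff₀ (by positivity) two_pos]
    nlinarith [mul_nonneg (sq_nonneg a) hm0.le]
  calc min (c / 2) (m / (4 * (S n n + 1))) * S (k + a • n) (k + a • n)
      ≤ min (c / 2) (m / (4 * (S n n + 1))) * (2 * S k k + 2 * a ^ 2 * S n n) := by
        gcongr
        exact add_smul_apply_self_le hS k n a
    _ ≤ c / 2 * (2 * S k k) + m / (4 * (S n n + 1)) * (2 * a ^ 2 * S n n) := by
        rw [mul_add]
        gcongr
        · exact mul_nonneg two_pos.le (hS k)
        · exact min_le_left _ _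
        · exact min_le_right _ _
    _ ≤ B k k + a ^ 2 * m / 2 := by linarith [hker k hk]
    _ ≤ B (k + a • n) (k + a • n) + 2 / m * B (k + a • n) n ^ 2 := by
        rw [← hJ]
        linarith

lemma exists_coercive_of_mem_radical (hB : B.IsSymm) (hS : ∀ g, 0 ≤ S g g) (hc : 0 < c)
    (hker : ∀ k, δ k = 0 → c * S k k ≤ B k k) (hn : ∀ g, B g n = 0) (hδ : δ n ≠ 0)
    {ℓ : E →ₗ[ℝ] ℝ} (hℓ : ℓ n ≠ 0) {C : ℝ} (hC : 0 ≤ C) (hbound : ∀ k, ℓ k ^ 2 ≤ C * S k k) :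
    ∃ c' > 0, ∃ M, ∀ g, c' * S g g ≤ B g g + M * ℓ g ^ 2 := by
  obtain ⟨W, hW⟩ : ∃ W, W = S n n / ℓ n ^ 2 := ⟨_, rfl⟩
  have hW0 : 0 ≤ W := hW ▸ div_nonneg (hS n) (sq_nonneg _)
  obtain ⟨A, hA⟩ : ∃ A, A = 2 + 4 * C * W := ⟨_, rfl⟩
  have hA0 : 0 < A := by rw [hA]; positivity
  refine ⟨c / A, div_pos hc hA0, c / A * (4 * W), fun g => ?_⟩
  obtain ⟨k, a, hk, rfl⟩ := exists_mem_ker_add_smul hδ g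
  have hexpand : B (k + a • n) (k + a • n) = B k k := by
    have hsymm : B n k = 0 := (hB.eq n k).trans (hn k)
    simp only [map_add, map_smul, LinearMap.add_apply, LinearMap.smul_apply, hn, hsymm,
      smul_zero, add_zero]
  have ha : a ^ 2 * S n n ≤ 2 * W * (ℓ (k + a • n) ^ 2 + C * S k k) := by
    have hsub : a ^ 2 * S n n = W * (ℓ (k + a • n) - ℓ k) ^ 2 := by
      rw [map_add, map_smul, add_sub_cancel_left, smul_eq_mul, hW]
      field_simp
    have hℓk := hbound k
    rw [hsub, mul_comm 2 W, mul_assoc]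
    gcongr
    nlinarith [sq_nonneg (ℓ (k + a • n) + ℓ k)]
  calc c / A * S (k + a • n) (k + a • n)
      ≤ c / A * (A * S k k + 4 * W * ℓ (k + a • n) ^ 2) := by
        gcongr
        rw [hA]
        linarith [add_smul_apply_self_le hS k n a]
    _ = c * S k k + c / A * (4 * W) * ℓ (k + a • n) ^ 2 := by
        field_simp
    _ ≤ B (k + a • n) (k + a • n) + c / A * (4 * W) * ℓ (k + a • n) ^ 2 := by
        rw [hexpand]
        gcongr
        exact hker k hk

end ConstrainedCoercivity

/-! ### The radial ground state -/

/-- The profile `q` of a positive, exponentially decaying radial solution of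
`ΔQ - Q + Q^(1+σ) = 0` on `ℝ^(d+1)`, together with its derivative `q'`. -/
structure RadialGroundState (d : ℕ) (σ : ℝ) (q q' : ℝ → ℝ) : Prop where
  exponent_pos : 0 < σ
  pos : ∀ r, 0 < q r
  hasDerivAt : ∀ r, HasDerivAt q (q' r) r
  expDecay : ExpDecay q
  laplacian : HasRadialLaplacian d q' fun r => q r - q r * q r ^ σ

namespace RadialGroundState

variable {d : ℕ} {σ : ℝ} {q q' : ℝ → ℝ}

lemma continuous (h : RadialGroundState d σ q q') : Continuous q :=
  continuous_iff_continuousAt.2 fun r => (h.hasDerivAt r).continuousAt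

lemma continuous_deriv (h : RadialGroundState d σ q q') : Continuous q' :=
  h.laplacian.continuous

lemma continuous_rpow (h : RadialGroundState d σ q q') : Continuous fun r => q r ^ σ :=
  h.continuous.rpow_const fun r => Or.inl (h.pos r).ne'

lemma rpow_pos (h : RadialGroundState d σ q q') (r : ℝ) : 0 < q r ^ σ :=
  Real.rpow_pos_of_pos (h.pos r) σ

lemma hasDerivAt_rpow (h : RadialGroundState d σ q q') (r : ℝ) :
    HasDerivAt (fun t => q t ^ σ) (σ * q r ^ σ * (q' r / q r)) r := by
  refine ((h.hasDerivAt r).rpow_const (p := σ) (Or.inl (h.pos r).ne')).congr_deriv ?_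
  rw [Real.rpow_sub_one (h.pos r).ne']
  ring

lemma tendsto_rpow_zero (h : RadialGroundState d σ q q') :
    Tendsto (fun r => q r ^ σ) atTop (𝓝 0) := by
  have hlim := h.expDecay.tendsto_zero.rpow_const (p := σ) (Or.inr h.exponent_pos.le)
  rwa [Real.zero_rpow h.exponent_pos.ne'] at hlim

lemma monotoneOn_flux (h : RadialGroundState d σ q q') {R : ℝ} (hR : 0 ≤ R)
    (hle : ∀ r, R ≤ r → q r ^ σ < 1) : MonotoneOn (fun r => r ^ d * q' r) (Ici R) := by
  have hc := h.continuous_deriv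
  refine monotoneOn_of_hasDerivWithinAt_nonneg (convex_Ici R) (by fun_prop)
    (f' := fun r => r ^ d * (q r - q r * q r ^ σ)) ?_ ?_ <;>
    rw [interior_Ici] <;> intro r hr
  · exact (h.laplacian.hasDerivAt_flux (hR.trans_lt hr)).hasDerivWithinAt
  · have hr0 : 0 ≤ r := hR.trans (le_of_lt hr)
    have := mul_le_mul_of_nonneg_left (hle r (le_of_lt hr)).le (h.pos r).le
    exact mul_nonneg (pow_nonneg hr0 d) (by linarith)

lemma deriv_nonpos_of_rpow_lt_one (h : RadialGroundState d σ q q') {R : ℝ} (hR : 0 < R)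
    (hle : ∀ r, R ≤ r → q r ^ σ < 1) : q' R ≤ 0 := by
  by_contra! hpos
  have hmono : MonotoneOn q (Ici R) := by
    refine monotoneOn_of_hasDerivWithinAt_nonneg (convex_Ici R) h.continuous.continuousOn
      (fun r _ => (h.hasDerivAt r).hasDerivWithinAt) ?_
    rw [interior_Ici]
    intro r (hr : R < r)
    have hflux : 0 < r ^ d * q' r := (mul_pos (pow_pos hR d) hpos).trans_le <|
      h.monotoneOn_flux hR.le hle self_mem_Ici hr.le hr.le
    exact (pos_of_mul_pos_right hflux (pow_nonneg (hR.trans hr).le d)).le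
  refine (h.pos R).not_ge (ge_of_tendsto h.expDecay.tendsto_zero ?_)
  filter_upwards [eventually_ge_atTop R] with r hr using hmono self_mem_Ici hr hr

lemma eventually_abs_deriv_le (h : RadialGroundState d σ q q') :
    ∀ᶠ r in atTop, |q' r| ≤ q (r - 1) := by
  obtain ⟨R, hR⟩ := eventually_atTop.1 (h.tendsto_rpow_zero.eventually_lt_const one_pos)
  filter_upwards [eventually_gt_atTop (max R 0 + 1)] with r hr
  obtain ⟨hRr, h0r⟩ := max_lt_iff.1 (lt_sub_iff_add_lt.2 hr)
  obtain ⟨x, ⟨hx1, hx2⟩, hslope⟩ := exists_hasDerivAt_eq_slope q q' (sub_one_lt r)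
    h.continuous.continuousOn fun x _ => h.hasDerivAt x
  have hx0 : 0 < x := h0r.trans hx1
  have hle : ∀ y, x ≤ y → q y ^ σ < 1 := fun y hy => hR y (by linarith)
  have hq'x : q' x ≤ 0 := h.deriv_nonpos_of_rpow_lt_one hx0 hle
  have hq'r : q' r ≤ 0 :=
    h.deriv_nonpos_of_rpow_lt_one (hx0.trans hx2) fun y hy => hle y (hx2.le.trans hy)
  have hflux : r ^ d * q' x ≤ r ^ d * q' r := calc
    r ^ d * q' x ≤ x ^ d * q' x :=
      mul_le_mul_of_nonpos_right (pow_le_pow_left₀ hx0.le hx2.le d) hq'x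
    _ ≤ r ^ d * q' r := h.monotoneOn_flux hx0.le hle self_mem_Ici hx2.le hx2.le
  rw [sub_sub_cancel, div_one] at hslope
  rw [abs_of_nonpos hq'r]
  linarith [le_of_mul_le_mul_left hflux (pow_pos (hx0.trans hx2) d), h.pos r]

lemma expDecay_deriv (h : RadialGroundState d σ q q') : ExpDecay q' := by
  obtain ⟨c, hc, hqc⟩ := h.expDecay
  refine ⟨c, hc, ?_⟩
  have hshift : (fun r => q (r - 1)) =O[atTop] fun r => Real.exp (-c * r) := by
    refine (hqc.comp_tendsto (tendsto_atTop_add_const_right _ (-1) tendsto_id)).trans ?_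
    refine (isBigO_const_mul_self (Real.exp c) _ atTop).congr_left fun r => ?_
    simp only [Function.comp_apply, id, ← Real.exp_add]
    ring_nf
  refine (IsBigO.of_bound 1 ?_).trans hshift
  filter_upwards [h.eventually_abs_deriv_le] with r hr
  rwa [one_mul, Real.norm_eq_abs, Real.norm_of_nonneg (h.pos _).le]

end RadialGroundState

namespace RadialGroundState

variable {d : ℕ} {σ : ℝ} {q q' : ℝ → ℝ}

lemma antitoneOn_energy (h : RadialGroundState d σ q q') :
    AntitoneOn (fun r => q' r ^ 2 / 2 - q r ^ 2 / 2 + q r ^ 2 * q r ^ σ / (σ + 2)) (Ici 0) := by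
  have hc := h.continuous
  have hc' := h.continuous_deriv
  have hcσ := h.continuous_rpow
  have hσ := h.exponent_pos
  refine antitoneOn_of_hasDerivWithinAt_nonpos (convex_Ici 0) (by fun_prop)
    (f' := fun r => -(d / r * q' r ^ 2)) ?_ ?_ <;> rw [interior_Ici] <;> intro r hr
  · refine HasDerivAt.hasDerivWithinAt ?_
    refine (((((h.laplacian.hasDerivAt r hr).pow 2).div_const 2).sub
      (((h.hasDerivAt r).pow 2).div_const 2)).add
      ((((h.hasDerivAt r).pow 2).mul (h.hasDerivAt_rpow r)).div_const (σ + 2))).congr_deriv ?_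
    simp only [Pi.pow_apply, Nat.cast_ofNat, Nat.reduceSub, pow_one]
    field_simp
    ring
  · have : 0 ≤ d / r := div_nonneg (Nat.cast_nonneg d) (le_of_lt hr)
    exact neg_nonpos.2 (mul_nonneg this (sq_nonneg _))

lemma energy_nonneg (h : RadialGroundState d σ q q') {r : ℝ} (hr : 0 ≤ r) :
    0 ≤ q' r ^ 2 / 2 - q r ^ 2 / 2 + q r ^ 2 * q r ^ σ / (σ + 2) := by
  have hq := h.expDecay.tendsto_zero
  have hlim : Tendsto (fun r => q' r ^ 2 / 2 - q r ^ 2 / 2 + q r ^ 2 * q r ^ σ / (σ + 2))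
      atTop (𝓝 (0 ^ 2 / 2 - 0 ^ 2 / 2 + 0 ^ 2 * 0 / (σ + 2))) :=
    (((h.expDecay_deriv.tendsto_zero.pow 2).div_const 2).sub ((hq.pow 2).div_const 2)).add
      (((hq.pow 2).mul h.tendsto_rpow_zero).div_const (σ + 2))
  simp only [ne_eq, OfNat.ofNat_ne_zero, not_false_eq_true, zero_pow, zero_div, sub_zero,
    zero_mul, add_zero] at hlim
  refine le_of_tendsto hlim ?_
  filter_upwards [eventually_ge_atTop r] with t ht
  exact h.antitoneOn_energy hr (hr.trans ht) ht

lemma one_lt_rpow_of_deriv_eq_zero (h : RadialGroundState d σ q q') {r : ℝ} (hr : 0 ≤ r)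
    (hz : q' r = 0) : 1 < q r ^ σ := by
  have hσ := h.exponent_pos
  have hE := h.energy_nonneg hr
  have hE' : 0 ≤ q r ^ 2 * (q r ^ σ / (σ + 2) - 1 / 2) := by
    rw [hz] at hE
    linear_combination hE
  have hp := nonneg_of_mul_nonneg_right hE' (pow_pos (h.pos r) 2)
  rw [sub_nonneg, div_le_div_iff₀ two_pos (by positivity)] at hp
  linarith

lemma strictAntiOn_flux (h : RadialGroundState d σ q q') {a b : ℝ} (ha : 0 ≤ a)
    (hgt : ∀ r ∈ Ioo a b, 1 < q r ^ σ) : StrictAntiOn (fun r => r ^ d * q' r) (Icc a b) := by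
  have hc := h.continuous_deriv
  refine strictAntiOn_of_hasDerivWithinAt_neg (convex_Icc a b) (by fun_prop)
    (f' := fun r => r ^ d * (q r - q r * q r ^ σ)) ?_ ?_ <;> rw [interior_Icc] <;> intro r hr
  · exact (h.laplacian.hasDerivAt_flux (ha.trans_lt hr.1)).hasDerivWithinAt
  · have := (mul_lt_mul_iff_right₀ (h.pos r)).2 (hgt r hr)
    exact mul_neg_of_pos_of_neg (pow_pos (ha.trans_lt hr.1) d) (by linarith)

lemma exists_lt_deriv_neg (h : RadialGroundState d σ q q') {r b : ℝ} (hr : 0 ≤ r) (hrb : r < b)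
    (hz : q' r = 0) : ∃ t ∈ Ioo r b, q' t < 0 := by
  have hnear : ∀ᶠ t in 𝓝[>] r, t ∈ Ioo r b ∧ 1 < q t ^ σ :=
    Eventually.and (Ioo_mem_nhdsGT hrb) <| nhdsWithin_le_nhds <|
      h.continuous_rpow.continuousAt.eventually <|
        lt_mem_nhds (h.one_lt_rpow_of_deriv_eq_zero hr hz)
  obtain ⟨u, hu : r < u, hsub⟩ := mem_nhdsGT_iff_exists_Ioo_subset.1 hnear
  obtain ⟨t, ht⟩ := exists_between hu
  have hflux := h.strictAntiOn_flux hr (fun s hs => (hsub hs).2) (left_mem_Icc.2 hu.le)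
    (Ioo_subset_Icc_self ht) ht.1
  simp only [hz, mul_zero] at hflux
  exact ⟨t, (hsub ht).1, neg_of_mul_neg_right hflux (pow_nonneg (hr.trans ht.1.le) d)⟩

lemma exists_lt_deriv_pos (h : RadialGroundState d σ q q') {r : ℝ} (hr : 0 < r)
    (hz : q' r = 0) : ∃ t ∈ Ioo 0 r, 0 < q' t := by
  have hnear : ∀ᶠ t in 𝓝[<] r, t ∈ Ioo 0 r ∧ 1 < q t ^ σ :=
    Eventually.and (Ioo_mem_nhdsLT hr) <| nhdsWithin_le_nhds <|
      h.continuous_rpow.continuousAt.eventually <|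
        lt_mem_nhds (h.one_lt_rpow_of_deriv_eq_zero hr.le hz)
  obtain ⟨u, hu : u < r, hsub⟩ := mem_nhdsLT_iff_exists_Ioo_subset.1 hnear
  obtain ⟨t, ht⟩ := exists_between hu
  have ht0 : 0 < t := (hsub ht).1.1
  have hflux := h.strictAntiOn_flux ht0.le (fun s hs => (hsub ⟨ht.1.trans hs.1, hs.2⟩).2)
    (left_mem_Icc.2 ht.2.le) (right_mem_Icc.2 ht.2.le) ht.2
  simp only [hz, mul_zero] at hflux
  exact ⟨t, (hsub ht).1, pos_of_mul_pos_right hflux (pow_nonneg ht0.le d)⟩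

lemma deriv_neg (h : RadialGroundState d σ q q') {r : ℝ} (hr : 0 < r) : q' r < 0 := by
  by_contra! hnonneg
  obtain ⟨b, hb0, hbpos⟩ : ∃ b, 0 < b ∧ 0 < q' b := by
    rcases hnonneg.eq_or_lt with hz | hpos
    · obtain ⟨t, ht, hpos⟩ := h.exists_lt_deriv_pos hr hz.symm
      exact ⟨t, ht.1, hpos⟩
    · exact ⟨r, hr, hpos⟩
  have hcompact : IsCompact (Icc 0 b ∩ {t | q' t ≤ 0}) :=
    isCompact_Icc.inter_right (isClosed_le h.continuous_deriv continuous_const)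
  obtain ⟨t, ⟨⟨ht0, htb⟩, htle : q' t ≤ 0⟩, hgreatest⟩ :=
    hcompact.exists_isGreatest ⟨0, ⟨le_rfl, hb0.le⟩, h.laplacian.map_zero.le⟩
  have htb' : t < b := htb.lt_of_ne fun hEq => hbpos.not_ge (hEq ▸ htle)
  have hright : ∀ s ∈ Ioo t b, 0 < q' s := fun s hs => by
    by_contra! hs'
    exact hs.1.not_ge (hgreatest ⟨⟨ht0.trans hs.1.le, hs.2.le⟩, hs'⟩)
  have hzero : q' t = 0 := by
    refine htle.antisymm (ge_of_tendsto
      (h.continuous_deriv.continuousAt.tendsto.mono_left (nhdsWithin_le_nhds (s := Ioi t))) ?_)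
    filter_upwards [Ioo_mem_nhdsGT htb'] with s hs using (hright s hs).le
  obtain ⟨s, hs, hneg⟩ := h.exists_lt_deriv_neg ht0 htb' hzero
  exact hneg.not_gt (hright s hs)

lemma strictAntiOn (h : RadialGroundState d σ q q') : StrictAntiOn q (Ici 0) := by
  refine strictAntiOn_of_hasDerivWithinAt_neg (convex_Ici 0) h.continuous.continuousOn
    (fun r _ => (h.hasDerivAt r).hasDerivWithinAt) ?_
  rw [interior_Ici]
  exact fun r hr => h.deriv_neg hr

lemma strictAntiOn_rpow (h : RadialGroundState d σ q q') :
    StrictAntiOn (fun r => q r ^ σ) (Ici 0) := fun _ ha b hb hab =>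
  Real.rpow_lt_rpow (h.pos b).le (h.strictAntiOn ha hb hab) h.exponent_pos

end RadialGroundState

lemma pos_of_hasDerivAt_sign_change {P w s : ℝ → ℝ} (hc : Continuous P) (h0 : P 0 = 0)
    (hlim : Tendsto P atTop (𝓝 0)) (hderiv : ∀ r, 0 < r → HasDerivAt P (w r * s r) r)
    (hw : ∀ r, 0 < r → 0 < w r) (hs : ∀ a b, 0 < a → a < b → 0 ≤ s b → 0 < s a)
    {r : ℝ} (hr : 0 < r) : 0 < P r := by
  rcases le_or_gt 0 (s r) with hsr | hsr
  · have hmono : StrictMonoOn P (Icc 0 r) := by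
      refine strictMonoOn_of_hasDerivWithinAt_pos (convex_Icc 0 r) hc.continuousOn
        (f' := fun t => w t * s t) ?_ ?_ <;> rw [interior_Icc] <;> intro t ht
      · exact (hderiv t ht.1).hasDerivWithinAt
      · exact mul_pos (hw t ht.1) (hs t r ht.1 ht.2 hsr)
    exact h0.symm.trans_lt (hmono (left_mem_Icc.2 hr.le) (right_mem_Icc.2 hr.le) hr)
  · have hanti : StrictAntiOn P (Ici r) := by
      refine strictAntiOn_of_hasDerivWithinAt_neg (convex_Ici r) hc.continuousOn
        (f' := fun t => w t * s t) ?_ ?_ <;> rw [interior_Ici] <;> intro t (ht : r < t)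
      · exact (hderiv t (hr.trans ht)).hasDerivWithinAt
      · refine mul_neg_of_pos_of_neg (hw t (hr.trans ht)) ?_
        by_contra! hst
        exact (hs r t hr ht hst).not_gt hsr
    have hnext : 0 ≤ P (r + 1) := by
      refine le_of_tendsto hlim ?_
      filter_upwards [eventually_ge_atTop (r + 1)] with t ht
      have hrt : r ≤ r + 1 := (lt_add_one r).le
      exact hanti.antitoneOn hrt (hrt.trans ht) ht
    exact hnext.trans_lt (hanti self_mem_Ici (lt_add_one r).le (lt_add_one r))

namespace RadialGroundState

variable {d : ℕ} {σ : ℝ} {q q' : ℝ → ℝ}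

/-- The Pohozaev functional of a profile, i.e. the flux `r ^ (d+1) E + (d-1)/2 q r ^ d q'` with
`E = q'²/2 - q²/2 + q^(2+σ)/(σ+2)`. -/
def pohozaev (d : ℕ) (σ : ℝ) (q q' : ℝ → ℝ) (r : ℝ) : ℝ :=
  r ^ d * (r * (q' r ^ 2 / 2 - q r ^ 2 / 2 + q r ^ 2 * q r ^ σ / (σ + 2)))
    + (d - 1) / 2 * q r * (r ^ d * q' r)

lemma hasDerivAt_pohozaev (h : RadialGroundState d σ q q') {r : ℝ} (hr : 0 < r) :
    HasDerivAt (pohozaev d σ q q')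
      (r ^ d * q r ^ 2 * ((4 - (d - 1) * σ) / (2 * (σ + 2)) * q r ^ σ - 1)) r := by
  have hσ := h.exponent_pos
  have henergy := ((((h.laplacian.hasDerivAt r hr).pow 2).div_const 2).sub
    (((h.hasDerivAt r).pow 2).div_const 2)).add
    ((((h.hasDerivAt r).pow 2).mul (h.hasDerivAt_rpow r)).div_const (σ + 2))
  refine (((hasDerivAt_pow_of_pos d hr).mul ((hasDerivAt_id r).mul henergy)).add
    (((h.hasDerivAt r).const_mul ((d - 1 : ℝ) / 2)).mul
      (h.laplacian.hasDerivAt_flux hr))).congr_deriv ?_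
  simp only [Pi.pow_apply, Pi.mul_apply, Pi.add_apply, Pi.sub_apply, id]
  generalize q r ^ σ = A
  field_simp
  ring

lemma tendsto_pohozaev (h : RadialGroundState d σ q q') :
    Tendsto (pohozaev d σ q q') atTop (𝓝 0) := by
  have hq := h.expDecay.tendsto_zero
  have hq' := h.expDecay_deriv.tendsto_zero
  have hdq := (h.expDecay.pow_mul (d + 1)).tendsto_zero
  have hdq' := (h.expDecay_deriv.pow_mul (d + 1)).tendsto_zero
  have hflux := (h.expDecay_deriv.pow_mul d).tendsto_zero
  have hlim := ((((hdq'.mul hq').div_const 2).sub ((hdq.mul hq).div_const 2)).add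
    (((hdq.mul hq).mul h.tendsto_rpow_zero).div_const (σ + 2))).add
    ((hq.const_mul ((d - 1 : ℝ) / 2)).mul hflux)
  simp only [mul_zero, zero_div, sub_zero, add_zero] at hlim
  refine hlim.congr fun r => ?_
  simp only [pohozaev]
  ring

lemma pohozaev_pos (h : RadialGroundState d σ q q') {r : ℝ} (hr : 0 < r) :
    0 < pohozaev d σ q q' r := by
  have hc := h.continuous
  have hc' := h.continuous_deriv
  have hcσ := h.continuous_rpow
  refine pos_of_hasDerivAt_sign_change (by unfold pohozaev; fun_prop)
    (by simp only [pohozaev, h.laplacian.map_zero, zero_mul, mul_zero, add_zero])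
    h.tendsto_pohozaev (fun t ht => h.hasDerivAt_pohozaev ht)
    (fun t ht => mul_pos (pow_pos ht d) (pow_pos (h.pos t) 2)) (fun a b ha hab hb => ?_) hr
  have hβ : 0 < (4 - (d - 1) * σ) / (2 * (σ + 2)) :=
    pos_of_mul_pos_left (one_pos.trans_le (sub_nonneg.1 hb)) (h.rpow_pos b).le
  have := mul_lt_mul_of_pos_left (h.strictAntiOn_rpow ha.le (ha.trans hab).le hab) hβ
  linarith

/-- The logarithmic slope `-r q'/q` of a profile. -/
def logSlope (q q' : ℝ → ℝ) (r : ℝ) : ℝ := -(r * q' r) / q r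

/-- The derivative of `logSlope`, with `q''` eliminated by the equation for `q`. -/
def logSlopeDeriv (d : ℕ) (σ : ℝ) (q q' : ℝ → ℝ) (r : ℝ) : ℝ :=
  r * (q' r / q r) ^ 2 + (d - 1) * (q' r / q r) - r * (1 - q r ^ σ)

lemma hasDerivAt_logSlope (h : RadialGroundState d σ q q') {r : ℝ} (hr : 0 < r) :
    HasDerivAt (logSlope q q') (logSlopeDeriv d σ q q' r) r := by
  refine ((((hasDerivAt_id r).mul (h.laplacian.hasDerivAt r hr)).neg).div (h.hasDerivAt r)
    (h.pos r).ne').congr_deriv ?_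
  have hq := (h.pos r).ne'
  simp only [Pi.mul_apply, Pi.neg_apply, id, logSlopeDeriv]
  field_simp
  ring

lemma continuous_logSlope (h : RadialGroundState d σ q q') : Continuous (logSlope q q') :=
  (continuous_id.mul h.continuous_deriv).neg.div h.continuous fun r => (h.pos r).ne'

lemma logSlopeDeriv_pos (h : RadialGroundState d σ q q') {r : ℝ} (hr : 0 < r) :
    0 < logSlopeDeriv d σ q q' r := by
  have hσ := h.exponent_pos
  have hq := h.pos r
  have hid : r ^ d * q r ^ 2 * logSlopeDeriv d σ q q' r =
      2 * pohozaev d σ q q' r + r ^ d * r * q r ^ 2 * q r ^ σ * (σ / (σ + 2)) := by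
    simp only [pohozaev, logSlopeDeriv]
    field_simp
    ring
  have hpos : 0 < r ^ d * r * q r ^ 2 * q r ^ σ * (σ / (σ + 2)) :=
    mul_pos (mul_pos (by positivity) (h.rpow_pos r)) (by positivity)
  refine pos_of_mul_pos_right (a := r ^ d * q r ^ 2) ?_ (by positivity)
  rw [hid]
  linarith [h.pohozaev_pos hr]

lemma strictMonoOn_logSlope (h : RadialGroundState d σ q q') :
    StrictMonoOn (logSlope q q') (Ici 0) := by
  refine strictMonoOn_of_hasDerivWithinAt_pos (convex_Ici 0) h.continuous_logSlope.continuousOn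
    (f' := logSlopeDeriv d σ q q') ?_ ?_ <;> rw [interior_Ici] <;> intro r hr
  exacts [(h.hasDerivAt_logSlope hr).hasDerivWithinAt, h.logSlopeDeriv_pos hr]

lemma logSlope_zero (q q' : ℝ → ℝ) : logSlope q q' 0 = 0 := by
  simp only [logSlope, zero_mul, neg_zero, zero_div]

lemma logSlope_pos (h : RadialGroundState d σ q q') {r : ℝ} (hr : 0 < r) :
    0 < logSlope q q' r :=
  (logSlope_zero q q').symm.trans_lt (h.strictMonoOn_logSlope self_mem_Ici hr.le hr)

lemma frequently_neg_deriv_lt (h : RadialGroundState d σ q q') :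
    ∃ᶠ r in atTop, -q' r < 2 * q r := by
  intro hcon
  obtain ⟨R, hR⟩ := eventually_atTop.1 (hcon.and (eventually_gt_atTop (max 0 (2 * d : ℝ))))
  simp only [not_lt, max_lt_iff] at hR
  have hc := h.continuous
  have hc' := h.continuous_deriv
  have hanti : AntitoneOn (fun r => q' r + q r) (Ici R) := by
    refine antitoneOn_of_hasDerivWithinAt_nonpos (convex_Ici R) (by fun_prop)
      (f' := fun r => q r - q r * q r ^ σ - d / r * q' r + q' r) ?_ ?_ <;>
      rw [interior_Ici] <;> intro r (hr : R < r) <;>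
      obtain ⟨hsteep, hr0, hrd⟩ := hR r hr.le
    · exact ((h.laplacian.hasDerivAt r hr0).add (h.hasDerivAt r)).hasDerivWithinAt
    · have hq := mul_pos (h.pos r) (h.rpow_pos r)
      have hd : d / r ≤ 1 / 2 := by rw [div_le_iff₀ hr0]; linarith
      have := mul_le_mul_of_nonneg_right hd (neg_nonneg.2 (h.deriv_neg hr0).le)
      linarith
  have hlim := h.expDecay_deriv.tendsto_zero.add h.expDecay.tendsto_zero
  rw [add_zero] at hlim
  have hge : 0 ≤ q' R + q R := by
    refine le_of_tendsto hlim ?_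
    filter_upwards [eventually_ge_atTop R] with r hr using hanti self_mem_Ici hr hr
  linarith [(hR R le_rfl).1, h.pos R]

lemma exists_matching_radius (h : RadialGroundState d σ q q') :
    ∃ s > 0, (2 - σ * logSlope q q' s) * q s ^ σ = 2 := by
  have hσ := h.exponent_pos
  have hcφ := h.continuous_logSlope
  have hcσ := h.continuous_rpow
  obtain ⟨R, hqR, hR⟩ := ((h.tendsto_rpow_zero.eventually_lt_const one_pos).and
    (eventually_gt_atTop 0)).exists
  have hzero : 2 < (2 - σ * logSlope q q' 0) * q 0 ^ σ := by
    rw [logSlope_zero]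
    linarith [h.one_lt_rpow_of_deriv_eq_zero le_rfl h.laplacian.map_zero]
  have hlarge : (2 - σ * logSlope q q' R) * q R ^ σ < 2 := by
    have := mul_pos (mul_pos hσ (h.logSlope_pos hR)) (h.rpow_pos R)
    linarith
  obtain ⟨s, hs, heq⟩ := intermediate_value_Ioo' hR.le
    (f := fun r => (2 - σ * logSlope q q' r) * q r ^ σ) (by fun_prop) ⟨hlarge, hzero⟩
  exact ⟨s, hs.1, heq⟩

end RadialGroundState

/-! ### Jacobi's criterion -/

/-- A solution `v` of the radial equation `Δv = W v` on `ℝ^(d+1)`, away from the sphere `r = s`,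
whose only zero is a simple one at `s`. -/
structure IsSimpleZeroSolution (d : ℕ) (W v v' : ℝ → ℝ) (s : ℝ) : Prop where
  pos : 0 < s
  continuous : Continuous v
  continuous_deriv : Continuous v'
  hasDerivAt : ∀ r, 0 < r → HasDerivAt v (v' r) r
  hasDerivAt_deriv : ∀ r, 0 < r → r ≠ s → HasDerivAt v' (W r * v r - d / r * v' r) r
  deriv_map_zero : v' 0 = 0
  ne_zero : ∀ r, 0 ≤ r → r ≠ s → v r ≠ 0
  map_eq_zero : v s = 0
  deriv_ne_zero : v' s ≠ 0

/-- The flux `r ^ d (v'/v) g²`, obtained by completing the square in `|g' - (v'/v) g|²`. -/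
def piconeFlux (d : ℕ) (v v' g : ℝ → ℝ) (r : ℝ) : ℝ := r ^ d * (v' r / v r * g r ^ 2)

namespace IsSimpleZeroSolution

variable {d : ℕ} {W V v v' : ℝ → ℝ} {s : ℝ}

lemma hasDerivAt_piconeFlux (h : IsSimpleZeroSolution d W v v' s) (g : radialH1 d) {r : ℝ}
    (hr : 0 < r) (hrs : r ≠ s) :
    HasDerivAt (piconeFlux d v v' g.1.1)
      (r ^ d * (g.1.2 r ^ 2 + W r * g.1.1 r ^ 2 - (g.1.2 r - v' r / v r * g.1.1 r) ^ 2)) r := by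
  have hv := h.ne_zero r hr.le hrs
  refine ((hasDerivAt_pow_of_pos d hr).mul (((h.hasDerivAt_deriv r hr hrs).div
    (h.hasDerivAt r hr) hv).mul ((radialH1.hasDerivAt g hr).pow 2))).congr_deriv ?_
  simp only [Pi.mul_apply, Pi.pow_apply, Pi.div_apply]
  field_simp
  ring

lemma continuousAt_piconeFlux (h : IsSimpleZeroSolution d W v v' s) (g : radialH1 d)
    (hg : g.1.1 s = 0) {r : ℝ} (hr : 0 ≤ r) : ContinuousAt (piconeFlux d v v' g.1.1) r := by
  have hcg := radialH1.continuous g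
  have hcv' := h.continuous_deriv
  rcases eq_or_ne r s with rfl | hrs
  · have hdslope : piconeFlux d v v' g.1.1 =
        fun t => t ^ d * v' t * g.1.1 t * (dslope g.1.1 r t / dslope v r t) := by
      funext t
      rcases eq_or_ne t r with rfl | ht
      · simp only [piconeFlux, hg, ne_eq, OfNat.ofNat_ne_zero, not_false_eq_true, zero_pow,
          mul_zero, zero_mul]
      · rw [dslope_of_ne _ ht, dslope_of_ne _ ht, slope_def_field, slope_def_field, hg,
          h.map_eq_zero, sub_zero, sub_zero, div_div_div_cancel_right₀ (sub_ne_zero.2 ht)]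
        simp only [piconeFlux]
        ring
    have hcont : ContinuousAt (fun t => t ^ d * v' t * g.1.1 t) r := by fun_prop
    have hv := h.hasDerivAt r h.pos
    rw [hdslope]
    refine hcont.mul (ContinuousAt.div
      (continuousAt_dslope_same.2 (radialH1.hasDerivAt g h.pos).differentiableAt)
      (continuousAt_dslope_same.2 hv.differentiableAt) ?_)
    rw [dslope_same, hv.deriv]
    exact h.deriv_ne_zero
  · exact (continuous_pow d).continuousAt.mul ((hcv'.continuousAt.div h.continuous.continuousAt
      (h.ne_zero r hr hrs)).mul (hcg.pow 2).continuousAt)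

lemma piconeFlux_le_integral (h : IsSimpleZeroSolution d W v v' s)
    (hV : MemLp V ⊤ (radialMeasure d)) (hWV : ∀ r, 0 < r → r ≠ s → W r ≤ V r)
    (g : radialH1 d) (hg : g.1.1 s = 0) {R : ℝ} (hR : s < R) :
    piconeFlux d v v' g.1.1 R ≤ ∫ r in (0 : ℝ)..R,
      r ^ d * (1 * (g.1.2 r * g.1.2 r) + V r * (g.1.1 r * g.1.1 r)) := by
  set ψ : ℝ → ℝ := fun r => r ^ d * (1 * (g.1.2 r * g.1.2 r) + V r * (g.1.1 r * g.1.1 r))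
  have hψ : IntegrableOn ψ (Ioi 0) :=
    integrable_radialMeasure_iff.1 (radialH1.integrable_energy g g 1 hV)
  have hIcc : ∀ a b, 0 ≤ a → IntegrableOn ψ (Icc a b) := fun a b ha => by
    rw [integrableOn_Icc_iff_integrableOn_Ioc]
    exact hψ.mono_set fun r hr => ha.trans_lt hr.1
  have hstep : ∀ a b, 0 ≤ a → a ≤ b → (∀ r ∈ Ioo a b, r ≠ s) →
      piconeFlux d v v' g.1.1 b - piconeFlux d v v' g.1.1 a ≤ ∫ r in a..b, ψ r := by
    intro a b ha hab hne
    refine intervalIntegral.sub_le_integral_of_hasDeriv_right_of_le hab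
      (fun r hr => (h.continuousAt_piconeFlux g hg (ha.trans hr.1)).continuousWithinAt)
      (fun r hr => (h.hasDerivAt_piconeFlux g (ha.trans_lt hr.1) (hne r hr)).hasDerivWithinAt)
      (hIcc a b ha) fun r hr => ?_
    have hr0 : 0 < r := ha.trans_lt hr.1
    refine mul_le_mul_of_nonneg_left ?_ (pow_nonneg hr0.le d)
    have := mul_le_mul_of_nonneg_right (hWV r hr0 (hne r hr)) (sq_nonneg (g.1.1 r))
    linarith [sq_nonneg (g.1.2 r - v' r / v r * g.1.1 r)]
  have hleft := hstep 0 s le_rfl h.pos.le fun r hr => hr.2.ne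
  have hright := hstep s R h.pos.le hR.le fun r hr => hr.1.ne'
  have hzero : piconeFlux d v v' g.1.1 0 = 0 := by
    simp only [piconeFlux, h.deriv_map_zero, zero_div, zero_mul, mul_zero]
  rw [← intervalIntegral.integral_add_adjacent_intervals
    ((intervalIntegrable_iff_integrableOn_Icc_of_le h.pos.le).2 (hIcc 0 s le_rfl))
    ((intervalIntegrable_iff_integrableOn_Icc_of_le hR.le).2 (hIcc s R h.pos.le))]
  linarith

/-- Jacobi's criterion. -/
lemma energyForm_self_nonneg (h : IsSimpleZeroSolution d W v v' s)
    (hV : MemLp V ⊤ (radialMeasure d)) (hWV : ∀ r, 0 < r → r ≠ s → W r ≤ V r)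
    {C : ℝ} (hC : ∃ᶠ r in atTop, C ≤ v' r / v r) (g : radialH1 d) (hg : g.1.1 s = 0) :
    0 ≤ energyForm 1 hV g g := by
  have hflux : ∃ᶠ R in atTop, C * (R ^ d * g.1.1 R ^ 2) ≤ ∫ r in (0 : ℝ)..R,
      r ^ d * (1 * (g.1.2 r * g.1.2 r) + V r * (g.1.1 r * g.1.1 r)) := by
    refine (hC.and_eventually (eventually_gt_atTop s)).mono fun R ⟨hCR, hR⟩ => ?_
    have hR0 : 0 ≤ R := h.pos.le.trans hR.le
    refine le_trans ?_ (h.piconeFlux_le_integral hV hWV g hg hR)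
    calc C * (R ^ d * g.1.1 R ^ 2) ≤ v' R / v R * (R ^ d * g.1.1 R ^ 2) :=
          mul_le_mul_of_nonneg_right hCR (by positivity)
      _ = piconeFlux d v v' g.1.1 R := by simp only [piconeFlux]; ring
  have hlim := (radialH1.tendsto_pow_mul_sq_zero g).const_mul C
  have hint := intervalIntegral_tendsto_integral_Ioi 0
    (integrable_radialMeasure_iff.1 (radialH1.integrable_energy g g 1 hV)) tendsto_id
  rw [energyForm_apply, integral_radialMeasure]
  simpa only [mul_zero, sub_zero] using
    ge_of_tendsto_of_frequently (hint.sub hlim) (hflux.mono fun _ => sub_nonneg.2)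

end IsSimpleZeroSolution

/-! ### Coercivity of the linearized operators -/

lemma dslope_neg_of_strictAntiOn {F : ℝ → ℝ} {F' s r : ℝ} (hF : StrictAntiOn F (Ici 0))
    (hs : 0 ≤ s) (hderiv : HasDerivAt F F' s) (hF' : F' < 0) (hr : 0 ≤ r) :
    dslope F s r < 0 := by
  rcases eq_or_ne r s with rfl | hrs
  · rwa [dslope_same, hderiv.deriv]
  · rw [dslope_of_ne _ hrs, slope_def_field]
    rcases hrs.lt_or_gt with hlt | hlt
    · exact div_neg_of_pos_of_neg (sub_pos.2 (hF hr hs hlt)) (sub_neg.2 hlt)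
    · exact div_neg_of_neg_of_pos (sub_neg.2 (hF hs hr hlt)) (sub_pos.2 hlt)

lemma exists_le_div_of_strictAntiOn {F m : ℝ → ℝ} {F' m' s : ℝ} (hcF : Continuous F)
    (hcm : Continuous m) (hF : StrictAntiOn F (Ici 0)) (hm : StrictAntiOn m (Ici 0)) (hs : 0 ≤ s)
    (hFs : F s = 0) (hms : m s = 0) (hderivF : HasDerivAt F F' s) (hderivm : HasDerivAt m m' s)
    (hF' : F' < 0) (hm' : m' < 0) (R : ℝ) :
    ∃ κ > 0, ∀ r ∈ Icc 0 R, r ≠ s → κ ≤ F r / m r := by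
  have hnegF := fun r (hr : 0 ≤ r) => dslope_neg_of_strictAntiOn hF hs hderivF hF' hr
  have hnegm := fun r (hr : 0 ≤ r) => dslope_neg_of_strictAntiOn hm hs hderivm hm' hr
  have hcont : ContinuousOn (fun r => dslope F s r / dslope m s r) (Icc 0 (max R 0)) := by
    refine ContinuousOn.div ?_ ?_ fun r hr => (hnegm r hr.1).ne
    exacts [((continuousOn_dslope univ_mem).2 ⟨hcF.continuousOn, hderivF.differentiableAt⟩).mono
      (subset_univ _), ((continuousOn_dslope univ_mem).2
        ⟨hcm.continuousOn, hderivm.differentiableAt⟩).mono (subset_univ _)]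
  obtain ⟨x, hx, hmin⟩ := isCompact_Icc.exists_isMinOn
    ⟨0, left_mem_Icc.2 (le_max_right R 0)⟩ hcont
  refine ⟨_, div_pos_of_neg_of_neg (hnegF x hx.1) (hnegm x hx.1), fun r hr hrs => ?_⟩
  have hle : dslope F s x / dslope m s x ≤ dslope F s r / dslope m s r :=
    hmin ⟨hr.1, hr.2.trans (le_max_left R 0)⟩
  rwa [dslope_of_ne _ hrs, dslope_of_ne _ hrs, slope_def_field, slope_def_field, hFs, hms,
    sub_zero, sub_zero, div_div_div_cancel_right₀ (sub_ne_zero.2 hrs)] at hle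

namespace RadialGroundState

variable {d : ℕ} {σ : ℝ} {q q' : ℝ → ℝ}

/-- The generator `α q + r q'` of the rescalings `q ↦ l ^ α q(l ·)`. -/
def scaling (α : ℝ) (q q' : ℝ → ℝ) (r : ℝ) : ℝ := α * q r + r * q' r

/-- The derivative of `scaling`, with `q''` eliminated by the equation for `q`. -/
def scalingDeriv (d : ℕ) (σ α : ℝ) (q q' : ℝ → ℝ) (r : ℝ) : ℝ :=
  (α + 1 - d) * q' r + r * (q r - q r * q r ^ σ)

lemma continuous_scaling (h : RadialGroundState d σ q q') (α : ℝ) :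
    Continuous (scaling α q q') :=
  (continuous_const.mul h.continuous).add (continuous_id.mul h.continuous_deriv)

lemma hasDerivAt_scaling (h : RadialGroundState d σ q q') (α : ℝ) {r : ℝ} (hr : 0 < r) :
    HasDerivAt (scaling α q q') (scalingDeriv d σ α q q' r) r := by
  refine (((h.hasDerivAt r).const_mul α).add
    ((hasDerivAt_id r).mul (h.laplacian.hasDerivAt r hr))).congr_deriv ?_
  simp only [id, scalingDeriv]
  field_simp
  ring

/-- Differentiating the equation along rescalings: `L₊(αq + rq') = q (-2 + (2 - σα) q^σ)`. -/
lemma hasRadialLaplacian_scaling (h : RadialGroundState d σ q q') (α : ℝ) :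
    HasRadialLaplacian d (scalingDeriv d σ α q q') fun r =>
      (1 - (1 + σ) * q r ^ σ) * scaling α q q' r - q r * (-2 + (2 - σ * α) * q r ^ σ) where
  continuous := by
    have hc := h.continuous
    have hc' := h.continuous_deriv
    have hcσ := h.continuous_rpow
    unfold scalingDeriv
    fun_prop
  map_zero := by simp only [scalingDeriv, h.laplacian.map_zero, mul_zero, zero_mul, add_zero]
  hasDerivAt r hr := by
    refine (((h.laplacian.hasDerivAt r hr).const_mul (α + 1 - d)).add ((hasDerivAt_id r).mul
      ((h.hasDerivAt r).sub ((h.hasDerivAt r).mul (h.hasDerivAt_rpow r))))).congr_deriv ?_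
    have hq := (h.pos r).ne'
    simp only [id, scaling, scalingDeriv, Pi.sub_apply, Pi.mul_apply]
    field_simp
    ring

lemma scaling_eq (h : RadialGroundState d σ q q') (α r : ℝ) :
    scaling α q q' r = q r * (α - logSlope q q' r) := by
  have hq := (h.pos r).ne'
  simp only [scaling, logSlope]
  field_simp
  ring

lemma scalingDeriv_eq (h : RadialGroundState d σ q q') (α r : ℝ) :
    scalingDeriv d σ α q q' r =
      q' r * (α - logSlope q q' r) - q r * logSlopeDeriv d σ q q' r := by
  have hq := (h.pos r).ne'
  simp only [scalingDeriv, logSlope, logSlopeDeriv]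
  field_simp
  ring

lemma logSlope_ne (h : RadialGroundState d σ q q') {r s : ℝ} (hr : 0 ≤ r) (hs : 0 < s)
    (hrs : r ≠ s) : logSlope q q' s - logSlope q q' r ≠ 0 :=
  sub_ne_zero.2 fun heq => hrs (h.strictMonoOn_logSlope.injOn hr hs.le heq.symm)

lemma isSimpleZeroSolution_scaling (h : RadialGroundState d σ q q') {s : ℝ} (hs : 0 < s) :
    IsSimpleZeroSolution d (fun r => 1 - (1 + σ) * q r ^ σ -
        (-2 + (2 - σ * logSlope q q' s) * q r ^ σ) / (logSlope q q' s - logSlope q q' r))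
      (scaling (logSlope q q' s) q q') (scalingDeriv d σ (logSlope q q' s) q q') s where
  pos := hs
  continuous := h.continuous_scaling _
  continuous_deriv := (h.hasRadialLaplacian_scaling _).continuous
  hasDerivAt r hr := h.hasDerivAt_scaling _ hr
  hasDerivAt_deriv r hr hrs := by
    refine ((h.hasRadialLaplacian_scaling (logSlope q q' s)).hasDerivAt r hr).congr_deriv ?_
    have hne := h.logSlope_ne hr.le hs hrs
    rw [h.scaling_eq]
    field_simp
  deriv_map_zero := (h.hasRadialLaplacian_scaling _).map_zero
  ne_zero r hr hrs := by
    rw [h.scaling_eq]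
    exact mul_ne_zero (h.pos r).ne' (h.logSlope_ne hr hs hrs)
  map_eq_zero := by rw [h.scaling_eq, sub_self, mul_zero]
  deriv_ne_zero := by
    rw [h.scalingDeriv_eq, sub_self, mul_zero, zero_sub]
    exact neg_ne_zero.2 (mul_pos (h.pos s) (h.logSlopeDeriv_pos hs)).ne'

lemma frequently_neg_two_le_scalingDeriv_div (h : RadialGroundState d σ q q') {s : ℝ}
    (hs : 0 < s) : ∃ᶠ r in atTop, -2 ≤
      scalingDeriv d σ (logSlope q q' s) q q' r / scaling (logSlope q q' s) q q' r := by
  refine (h.frequently_neg_deriv_lt.and_eventually (eventually_gt_atTop s)).mono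
    fun r ⟨hr, hsr⟩ => ?_
  have hr0 : 0 < r := hs.trans hsr
  have hm : logSlope q q' s - logSlope q q' r < 0 :=
    sub_neg.2 (h.strictMonoOn_logSlope hs.le hr0.le hsr)
  rw [h.scalingDeriv_eq, h.scaling_eq, le_div_iff_of_neg (mul_neg_of_pos_of_neg (h.pos r) hm)]
  have hslope := mul_pos_of_neg_of_neg (sub_neg.2 hr) hm
  have := mul_pos (h.pos r) (h.logSlopeDeriv_pos hr0)
  linarith

lemma exists_le_matching_quotient (h : RadialGroundState d σ q q') {s : ℝ} (hs : 0 < s)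
    (hmatch : (2 - σ * logSlope q q' s) * q s ^ σ = 2) (R : ℝ) :
    ∃ κ > 0, ∀ r ∈ Icc 0 R, r ≠ s →
      κ ≤ (-2 + (2 - σ * logSlope q q' s) * q r ^ σ) / (logSlope q q' s - logSlope q q' r) := by
  have hδ : 0 < 2 - σ * logSlope q q' s :=
    pos_of_mul_pos_left (two_pos.trans_eq hmatch.symm) (h.rpow_pos s).le
  have hcσ := h.continuous_rpow
  have hcφ := h.continuous_logSlope
  refine exists_le_div_of_strictAntiOn (F := fun r => -2 + (2 - σ * logSlope q q' s) * q r ^ σ)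
    (m := fun r => logSlope q q' s - logSlope q q' r) (by fun_prop) (by fun_prop)
    (fun a ha b hb hab => ?_)
    (fun a ha b hb hab => sub_lt_sub_left (h.strictMonoOn_logSlope ha hb hab) _) hs.le
    (neg_add_eq_zero.2 hmatch.symm) (sub_self _)
    (((h.hasDerivAt_rpow s).const_mul _).const_add (-2)) ((h.hasDerivAt_logSlope hs).const_sub _)
    ?_ (neg_neg_of_pos (h.logSlopeDeriv_pos hs)) R
  · exact add_lt_add_right (mul_lt_mul_of_pos_left (h.strictAntiOn_rpow ha hb hab) hδ) (-2)
  · exact mul_neg_of_pos_of_neg hδ <|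
      mul_neg_of_pos_of_neg (mul_pos h.exponent_pos (h.rpow_pos s)) <|
      div_neg_of_neg_of_pos (h.deriv_neg hs) (h.pos s)

lemma rpow_le_rpow_zero (h : RadialGroundState d σ q q') {r : ℝ} (hr : 0 ≤ r) :
    q r ^ σ ≤ q 0 ^ σ :=
  h.strictAntiOn_rpow.antitoneOn self_mem_Ici hr hr

lemma exists_potential_gap (h : RadialGroundState d σ q q') {s : ℝ} (hs : 0 < s)
    (hmatch : (2 - σ * logSlope q q' s) * q s ^ σ = 2) :
    ∃ θ > 0, ∃ c > 0, ∀ r, 0 < r → r ≠ s →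
      c ≤ (-2 + (2 - σ * logSlope q q' s) * q r ^ σ) / (logSlope q q' s - logSlope q q' r)
        + θ * (1 - (1 + σ) * q r ^ σ) := by
  have hσ := h.exponent_pos
  have hA := h.rpow_pos 0
  obtain ⟨R, hR⟩ := eventually_atTop.1 (h.tendsto_rpow_zero.eventually_lt_const
    (show 0 < 1 / (2 * (1 + σ)) by positivity))
  obtain ⟨κ, hκ, hle⟩ := h.exists_le_matching_quotient hs hmatch R
  obtain ⟨θ, hθ, hθκ⟩ : ∃ θ > 0, θ * ((1 + σ) * q 0 ^ σ) = κ / 2 :=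
    ⟨κ / (2 * (1 + σ) * q 0 ^ σ), by positivity, by field_simp⟩
  refine ⟨θ, hθ, min (κ / 2) (θ / 2), by positivity, fun r hr hrs => ?_⟩
  rcases le_total r R with hrR | hRr
  · have hθr : θ * ((1 + σ) * q r ^ σ) ≤ κ / 2 := hθκ ▸
      mul_le_mul_of_nonneg_left (mul_le_mul_of_nonneg_left (h.rpow_le_rpow_zero hr.le)
        (by positivity)) hθ.le
    linarith [min_le_left (κ / 2) (θ / 2), hle r ⟨hr.le, hrR⟩ hrs]
  · obtain ⟨κ', hκ', hle'⟩ := h.exists_le_matching_quotient hs hmatch r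
    have hsmall := hR r hRr
    rw [lt_div_iff₀ (by positivity)] at hsmall
    have hhalf := mul_le_mul_of_nonneg_left
      (show 1 / 2 ≤ 1 - (1 + σ) * q r ^ σ by linarith) hθ.le
    linarith [min_le_right (κ / 2) (θ / 2), hle' r ⟨hr.le, le_rfl⟩ hrs]

lemma memLp_top_potential (h : RadialGroundState d σ q q') (κ : ℝ) :
    MemLp (fun r => 1 - κ * q r ^ σ) ⊤ (radialMeasure d) := by
  have hc := h.continuous_rpow
  refine memLp_top_of_bound (continuous_const.sub (continuous_const.mul hc)).aestronglyMeasurable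
    (1 + |κ| * q 0 ^ σ) ?_
  filter_upwards [ae_radialMeasure_pos d] with r hr
  refine (norm_sub_le _ _).trans ?_
  rw [norm_one, norm_mul, Real.norm_eq_abs, Real.norm_of_nonneg (h.rpow_pos r).le]
  exact add_le_add_right (mul_le_mul_of_nonneg_left (h.rpow_le_rpow_zero hr.le) (abs_nonneg κ)) 1

/-- The bilinear form of `-Δ + 1 - κ Q ^ σ`: that of `L₊` for `κ = 1 + σ`, that of `L₋` for
`κ = 1`. -/
def linearizedForm (h : RadialGroundState d σ q q') (κ : ℝ) : LinearMap.BilinForm ℝ (radialH1 d) :=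
  energyForm 1 (h.memLp_top_potential κ)

lemma exists_coercive_of_eval_eq_zero (h : RadialGroundState d σ q q') :
    ∃ s, ∃ c > 0, ∀ g, radialH1.eval d s g = 0 →
      c * l2Form d g g ≤ h.linearizedForm (1 + σ) g g := by
  obtain ⟨s, hs, hmatch⟩ := h.exists_matching_radius
  obtain ⟨θ, hθ, c, hc, hgap⟩ := h.exists_potential_gap hs hmatch
  refine ⟨s, c / (1 + θ), by positivity, fun g hg => ?_⟩
  have hV : MemLp (fun r => (1 + θ) * (1 - (1 + σ) * q r ^ σ) - c) ⊤ (radialMeasure d) :=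
    ((h.memLp_top_potential (1 + σ)).const_mul (1 + θ)).sub (memLp_top_const c)
  have hnonneg := (h.isSimpleZeroSolution_scaling hs).energyForm_self_nonneg hV
    (fun r hr hrs => by linarith [hgap r hr hrs]) (h.frequently_neg_two_le_scalingDeriv_div hs)
    g hg
  have hint := (radialH1.integrable_energy g g 1 (h.memLp_top_potential (1 + σ))).const_mul (1 + θ)
  have hint' := (radialH1.integrable_mul g g).const_mul c
  have hle : energyForm 1 hV g g ≤
      (1 + θ) * h.linearizedForm (1 + σ) g g - c * l2Form d g g := by
    rw [l2Form_apply, linearizedForm, energyForm_apply, energyForm_apply, ← integral_const_mul,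
      ← integral_const_mul, ← integral_sub hint hint']
    refine integral_mono (radialH1.integrable_energy g g 1 hV) (hint.sub hint') fun r => ?_
    linarith [mul_nonneg hθ.le (mul_self_nonneg (g.1.2 r))]
  rw [div_mul_eq_mul_div, div_le_iff₀ (by positivity)]
  linarith

end RadialGroundState

lemma exists_coercive_of_le_add {E : Type*} {S B H T : E → ℝ} {c K M : ℝ} (hc : 0 < c)
    (hK : 0 ≤ K) (hS : ∀ g, c * S g ≤ B g + M * T g)
    (hH : ∀ g, H g ≤ B g + K * S g) : ∃ μ > 0, ∃ M', ∀ g, μ * H g ≤ B g + M' * T g := by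
  refine ⟨c / (c + K), by positivity, K * M / (c + K), fun g => ?_⟩
  rw [div_mul_eq_mul_div, div_mul_eq_mul_div, ← sub_le_iff_le_add, ← sub_div,
    div_le_iff₀ (by positivity)]
  linarith [mul_le_mul_of_nonneg_left (hS g) hK, mul_le_mul_of_nonneg_left (hH g) hc.le]

namespace RadialGroundState

variable {d : ℕ} {σ : ℝ} {q q' : ℝ → ℝ}

/-- The profile of `|x| ^ k Q`. -/
def powMul (h : RadialGroundState d σ q q') (k : ℕ) : radialH1 d :=
  ⟨_, radialH1.pow_mul_mem h.continuous h.continuous_deriv (fun r _ => h.hasDerivAt r) h.expDecay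
    h.expDecay_deriv k⟩

lemma powMul_apply (h : RadialGroundState d σ q q') (k : ℕ) (r : ℝ) :
    (h.powMul k).1.1 r = r ^ k * q r :=
  rfl

lemma expDecay_scaling (h : RadialGroundState d σ q q') (α : ℝ) : ExpDecay (scaling α q q') := by
  have hdecay := (h.expDecay.const_mul α).add (h.expDecay_deriv.pow_mul 1)
  simp only [pow_one] at hdecay
  exact hdecay

lemma expDecay_scalingDeriv (h : RadialGroundState d σ q q') (α : ℝ) :
    ExpDecay (scalingDeriv d σ α q q') := by
  have hrpow : ExpDecay fun r => q r * q r ^ σ :=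
    h.expDecay.mul_isBigO_one (h.tendsto_rpow_zero.isBigO_one ℝ)
  have hdecay := (h.expDecay_deriv.const_mul (α + 1 - d)).add
    ((h.expDecay.add (hrpow.const_mul (-1))).pow_mul 1)
  simp only [pow_one, neg_one_mul, ← sub_eq_add_neg] at hdecay
  exact hdecay

/-- The generator of rescalings `scaling α q q'`, as an element of `H¹`. -/
def scalingProfile (h : RadialGroundState d σ q q') (α : ℝ) : radialH1 d :=
  ⟨(scaling α q q', scalingDeriv d σ α q q'), h.continuous_scaling α,
    fun _ hr => h.hasDerivAt_scaling α hr,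
    (h.expDecay_scaling α).memLp_two (h.continuous_scaling α) d,
    (h.expDecay_scalingDeriv α).memLp_two (h.hasRadialLaplacian_scaling α).continuous d⟩

lemma l2Form_scalingProfile_powMul (h : RadialGroundState d σ q q') (α : ℝ) (k : ℕ) :
    l2Form d (h.scalingProfile α) (h.powMul k) =
      (α - (d + 1 + k) / 2) * l2Form d (h.powMul k) (h.powMul 0) := by
  have hint := radialH1.integrable_mul (h.scalingProfile α) (h.powMul k)
  have hint' := (radialH1.integrable_mul (h.powMul k) (h.powMul 0)).const_mul
    (α - (d + 1 + k) / 2)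
  have hc := h.continuous
  rw [← sub_eq_zero, l2Form_apply, l2Form_apply, ← integral_const_mul, ← integral_sub hint hint']
  refine integral_radialMeasure_eq_zero (g := fun r => 1 / 2 * (r ^ (k + 1) * q r * (r ^ 0 * q r)))
    (hint.sub hint')
    ((radialH1.integrable_mul (h.powMul (k + 1)) (h.powMul 0)).const_mul (1 / 2)) (by fun_prop)
    (by ring) fun r hr => ?_
  have hq := h.hasDerivAt r
  refine ((hasDerivAt_pow_of_pos d hr).mul ((((hasDerivAt_pow_of_pos (k + 1) hr).mul hq).mul
    ((hasDerivAt_pow_of_pos 0 hr).mul hq)).const_mul (1 / 2))).congr_deriv ?_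
  simp only [powMul_apply, scalingProfile, scaling, Pi.mul_apply]
  push_cast
  field_simp
  ring

lemma l2Form_powMul_zero_pos (h : RadialGroundState d σ q q') (k : ℕ) :
    0 < l2Form d (h.powMul k) (h.powMul 0) := by
  rw [l2Form_apply]
  refine integral_radialMeasure_pos (fun r hr => ?_) (radialH1.integrable_mul _ _)
  have hq := h.pos r
  simp only [powMul_apply]
  positivity

lemma isSymm_linearizedForm (h : RadialGroundState d σ q q') (κ : ℝ) :
    (h.linearizedForm κ).IsSymm :=
  isSymm_energyForm _

lemma linearizedForm_comm (h : RadialGroundState d σ q q') (κ : ℝ) (f g : radialH1 d) :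
    h.linearizedForm κ f g = h.linearizedForm κ g f :=
  (h.isSymm_linearizedForm κ).eq f g

lemma linearizedForm_self_antitone (h : RadialGroundState d σ q q') (g : radialH1 d) :
    Antitone fun κ => h.linearizedForm κ g g := fun _ _ hκ =>
  energyForm_self_mono _ _ (fun r _ => sub_le_sub_left
    (mul_le_mul_of_nonneg_right hκ (h.rpow_pos r).le) 1) g

lemma h1Form_self_le_linearizedForm (h : RadialGroundState d σ q q') {κ : ℝ} (hκ : 0 ≤ κ)
    (g : radialH1 d) :
    h1Form d g g ≤ h.linearizedForm κ g g + κ * q 0 ^ σ * l2Form d g g :=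
  h1Form_self_le _ (fun r hr => by
    linarith [mul_le_mul_of_nonneg_left (h.rpow_le_rpow_zero hr.le) hκ]) g

lemma linearizedForm_one_powMul_zero (h : RadialGroundState d σ q q') (g : radialH1 d) :
    h.linearizedForm 1 g (h.powMul 0) = 0 := by
  rw [linearizedForm, energyForm_eq_l2Form (n := h.powMul 0) (f := 0) _ ?_ g, map_zero]
  have hderiv : (h.powMul 0).1.2 = q' := by
    funext r
    simp only [powMul, CharP.cast_eq_zero, zero_mul, pow_zero, one_mul, zero_add]
  have hlapl : (fun r => (1 - 1 * q r ^ σ) * (h.powMul 0).1.1 r - (0 : radialH1 d).1.1 r) =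
      fun r => q r - q r * q r ^ σ := by
    funext r
    change (1 - 1 * q r ^ σ) * (r ^ 0 * q r) - 0 = _
    ring
  rw [hderiv, hlapl]
  exact h.laplacian

lemma linearizedForm_scalingProfile (h : RadialGroundState d σ q q') {α : ℝ} (hα : σ * α = 2)
    (g : radialH1 d) :
    h.linearizedForm (1 + σ) g (h.scalingProfile α) = -2 * l2Form d g (h.powMul 0) := by
  rw [linearizedForm, energyForm_eq_l2Form (n := h.scalingProfile α)
    (f := (-2 : ℝ) • h.powMul 0) _ ?_ g, map_smul, smul_eq_mul]
  have hlapl := h.hasRadialLaplacian_scaling α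
  have hf : ((-2 : ℝ) • h.powMul 0).1.1 = fun r => q r * -2 := by
    funext r
    change -2 * (r ^ 0 * q r) = q r * -2
    ring
  simp only [hα, sub_self, zero_mul, add_zero] at hlapl
  rw [hf]
  exact hlapl

section Rho

variable {w : radialH1 d}

lemma linearizedForm_eq_l2Form_powMul_two (h : RadialGroundState d σ q q')
    (hw : HasRadialLaplacian d w.1.2 fun r => (1 - (1 + σ) * q r ^ σ) * w.1.1 r - r ^ 2 * q r)
    (g : radialH1 d) : h.linearizedForm (1 + σ) g w = l2Form d g (h.powMul 2) :=
  energyForm_eq_l2Form _ hw g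

lemma linearizedForm_scalingProfile_rho (h : RadialGroundState d σ q q')
    (hw : ∀ g, h.linearizedForm (1 + σ) g w = l2Form d g (h.powMul 2)) :
    h.linearizedForm (1 + σ) (h.scalingProfile ((d + 1) / 2)) w =
      -l2Form d (h.powMul 2) (h.powMul 0) := by
  rw [hw, l2Form_scalingProfile_powMul]
  push_cast
  ring

lemma l2Form_rho_powMul_zero_pos (h : RadialGroundState d σ q q') (hσ : σ * (d + 1) = 4)
    (hw : ∀ g, h.linearizedForm (1 + σ) g w = l2Form d g (h.powMul 2)) :
    0 < l2Form d w (h.powMul 0) := by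
  have hdual := h.linearizedForm_scalingProfile_rho hw
  rw [h.linearizedForm_comm, h.linearizedForm_scalingProfile (by linarith)] at hdual
  linarith [h.l2Form_powMul_zero_pos 2]

/-- The witness is `Λ + t ρ` for small `t > 0`: `L₊(Λ + t ρ) = -2 Q + t |x|² Q`, and
`(L₊Λ, Λ) = 0` while `(L₊Λ, ρ) < 0`. -/
lemma exists_linearizedForm_add_smul_neg (h : RadialGroundState d σ q q') (hσ : σ * (d + 1) = 4)
    (hw : ∀ g, h.linearizedForm (1 + σ) g w = l2Form d g (h.powMul 2)) :
    ∃ n : radialH1 d, h.linearizedForm (1 + σ) n n < 0 ∧ ∃ t : ℝ, ∀ g,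
      h.linearizedForm (1 + σ) g n =
        -2 * l2Form d g (h.powMul 0) + t * l2Form d g (h.powMul 2) := by
  obtain ⟨Λ, hΛ⟩ : ∃ Λ, Λ = h.scalingProfile ((d + 1) / 2) := ⟨_, rfl⟩
  obtain ⟨B, hB⟩ : ∃ B, B = h.linearizedForm (1 + σ) := ⟨_, rfl⟩
  obtain ⟨X, hX⟩ : ∃ X, X = l2Form d (h.powMul 2) (h.powMul 0) := ⟨_, rfl⟩
  have hX0 : 0 < X := hX ▸ h.l2Form_powMul_zero_pos 2
  obtain ⟨t, ht, htX⟩ : ∃ t > 0, t * B w w ≤ X := by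
    refine ⟨X / (|B w w| + 1), by positivity, ?_⟩
    rw [div_mul_eq_mul_div, div_le_iff₀ (by positivity)]
    gcongr
    linarith [le_abs_self (B w w)]
  have hBΛ : ∀ g, B g Λ = -2 * l2Form d g (h.powMul 0) := fun g => by
    rw [hB, hΛ, h.linearizedForm_scalingProfile (by linarith)]
  have hΛΛ : B Λ Λ = 0 := by
    rw [hBΛ, hΛ, l2Form_scalingProfile_powMul, Nat.cast_zero, add_zero, sub_self, zero_mul,
      mul_zero]
  have hΛw : B Λ w = -X := by
    rw [hB, hΛ, h.linearizedForm_scalingProfile_rho hw, hX]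
  have hwΛ : B w Λ = -X := by
    rw [← hΛw, hB, h.linearizedForm_comm]
  refine ⟨Λ + t • w, ?_, t, fun g => ?_⟩
  · simp only [← hB, map_add, map_smul, LinearMap.add_apply, LinearMap.smul_apply, smul_eq_mul,
      hΛΛ, hΛw, hwΛ]
    linarith [mul_pos ht hX0, mul_le_mul_of_nonneg_left htX ht.le]
  · rw [map_add, map_smul, smul_eq_mul, hw, ← hB, hBΛ]

lemma exists_coercive_linearizedForm_one_add (h : RadialGroundState d σ q q')
    (hσ : σ * (d + 1) = 4)
    (hw : ∀ g, h.linearizedForm (1 + σ) g w = l2Form d g (h.powMul 2)) :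
    ∃ μ > 0, ∃ M, ∀ g, μ * h1Form d g g ≤ h.linearizedForm (1 + σ) g g +
      M * (l2Form d g (h.powMul 0) ^ 2 + l2Form d g (h.powMul 2) ^ 2) := by
  obtain ⟨s, c, hc, hker⟩ := h.exists_coercive_of_eval_eq_zero
  obtain ⟨n, hneg, t, hn⟩ := h.exists_linearizedForm_add_smul_neg hσ hw
  obtain ⟨c', hc', M, hM, hcoer⟩ := exists_coercive_of_apply_self_neg
    (h.isSymm_linearizedForm (1 + σ)) l2Form_self_nonneg hc hker hneg
  have hσ0 := h.exponent_pos
  have hq0 := h.rpow_pos 0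
  refine exists_coercive_of_le_add (M := M * (8 + 2 * t ^ 2)) hc' (by positivity)
    (fun g => ?_) (h.h1Form_self_le_linearizedForm (by positivity))
  obtain ⟨x, hx⟩ : ∃ x, x = l2Form d g (h.powMul 0) := ⟨_, rfl⟩
  obtain ⟨y, hy⟩ : ∃ y, y = l2Form d g (h.powMul 2) := ⟨_, rfl⟩
  have hsq : (-2 * x + t * y) ^ 2 ≤ (8 + 2 * t ^ 2) * (x ^ 2 + y ^ 2) := by
    nlinarith [sq_nonneg (2 * x + t * y), sq_nonneg (t * x), sq_nonneg y]
  refine (hcoer g).trans ?_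
  rw [hn, ← hx, ← hy, mul_assoc]
  gcongr

lemma exists_coercive_linearizedForm_one (h : RadialGroundState d σ q q') (hσ : σ * (d + 1) = 4)
    (hw : ∀ g, h.linearizedForm (1 + σ) g w = l2Form d g (h.powMul 2)) :
    ∃ μ > 0, ∃ M, ∀ g,
      μ * h1Form d g g ≤ h.linearizedForm 1 g g + M * l2Form d w g ^ 2 := by
  obtain ⟨s, c, hc, hker⟩ := h.exists_coercive_of_eval_eq_zero
  have hle : ∀ g, h.linearizedForm (1 + σ) g g ≤ h.linearizedForm 1 g g := fun g =>
    h.linearizedForm_self_antitone g (by linarith [h.exponent_pos])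
  have heval : radialH1.eval d s (h.powMul 0) ≠ 0 :=
    mul_ne_zero (pow_zero s ▸ one_ne_zero) (h.pos s).ne'
  obtain ⟨c', hc', M, hcoer⟩ := exists_coercive_of_mem_radical (h.isSymm_linearizedForm 1)
    l2Form_self_nonneg hc (fun k hk => (hker k hk).trans (hle k))
    h.linearizedForm_one_powMul_zero heval
    (h.l2Form_rho_powMul_zero_pos hσ hw).ne' (l2Form_self_nonneg w) <|
    LinearMap.BilinForm.apply_sq_le_of_symm _ l2Form_self_nonneg
      (LinearMap.BilinForm.isSymm_iff.1 (isSymm_l2Form d)) w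
  have hq0 := h.rpow_pos 0
  exact exists_coercive_of_le_add (T := fun g => l2Form d w g ^ 2) hc'
    (by positivity) hcoer (h.h1Form_self_le_linearizedForm zero_le_one)

end Rho

end RadialGroundState

/-! ### Radial functions on `ℝ^(d+1)` -/

/-- `f` depends on `‖x‖` only. -/
def IsRadial {E F : Type*} [Norm E] (f : E → F) : Prop := ∀ x y, ‖x‖ = ‖y‖ → f x = f y

/-- The restriction of `f` to a coordinate axis. For radial `f`, this is the even function with
`f x = radialProfile f ‖x‖`. -/
def radialProfile {d : ℕ} {F : Type*} (f : EuclideanSpace ℝ (Fin (d + 1)) → F) (t : ℝ) : F :=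
  f (t • EuclideanSpace.single 0 1)

section RadialCalculus

variable {d : ℕ}

lemma norm_smul_single_zero_one (t : ℝ) :
    ‖t • (EuclideanSpace.single 0 1 : EuclideanSpace ℝ (Fin (d + 1)))‖ = |t| := by
  rw [norm_smul, PiLp.norm_single, norm_one, mul_one, Real.norm_eq_abs]

lemma smul_single_zero_one_ne_zero {r : ℝ} (hr : 0 < r) :
    r • (EuclideanSpace.single 0 1 : EuclideanSpace ℝ (Fin (d + 1))) ≠ 0 :=
  norm_pos_iff.1 (by rwa [norm_smul_single_zero_one, abs_of_pos hr])

lemma IsRadial.eq_radialProfile_norm {F : Type*} {f : EuclideanSpace ℝ (Fin (d + 1)) → F}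
    (hf : IsRadial f) (x : EuclideanSpace ℝ (Fin (d + 1))) : f x = radialProfile f ‖x‖ :=
  hf _ _ (by rw [norm_smul_single_zero_one, abs_norm])

lemma hasFDerivAt_norm_of_ne_zero {E : Type*} [NormedAddCommGroup E] [InnerProductSpace ℝ E] {x : E}
    (hx : x ≠ 0) : HasFDerivAt (fun y : E => ‖y‖) (‖x‖⁻¹ • innerSL ℝ x) x := by
  have hn : ‖x‖ ≠ 0 := norm_ne_zero_iff.2 hx
  have hsqrt := (hasStrictFDerivAt_norm_sq x).hasFDerivAt.sqrt (pow_ne_zero 2 hn)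
  simp only [Real.sqrt_sq (norm_nonneg _)] at hsqrt
  refine hsqrt.congr_fderiv ?_
  rw [two_nsmul, ← two_smul ℝ, smul_smul]
  congr 1
  field_simp

variable {f : EuclideanSpace ℝ (Fin (d + 1)) → ℝ} {x : EuclideanSpace ℝ (Fin (d + 1))}

lemma IsRadial.deriv_radialProfile_zero (hf : IsRadial f) : deriv (radialProfile f) 0 = 0 := by
  have heven : (fun t => radialProfile f (-t)) = radialProfile f := funext fun t =>
    hf _ _ (by rw [norm_smul_single_zero_one, norm_smul_single_zero_one, abs_neg])
  have hderiv := deriv_comp_neg (radialProfile f) 0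
  rw [heven, neg_zero] at hderiv
  linarith

lemma hasDerivAt_radialProfile (hf : ∀ x ≠ 0, DifferentiableAt ℝ f x) {r : ℝ} (hr : 0 < r) :
    HasDerivAt (radialProfile f) (deriv (radialProfile f) r) r :=
  ((hf _ (smul_single_zero_one_ne_zero hr)).comp r
    (differentiableAt_id.smul_const _)).hasDerivAt

lemma IsRadial.fderiv_single (hf : IsRadial f) (hdiff : ∀ x ≠ 0, DifferentiableAt ℝ f x)
    (hx : x ≠ 0) (i : Fin (d + 1)) :
    fderiv ℝ f x (EuclideanSpace.single i 1) = deriv (radialProfile f) ‖x‖ / ‖x‖ * x i := by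
  have hcomp := (hasDerivAt_radialProfile hdiff (norm_pos_iff.2 hx)).comp_hasFDerivAt x
    (hasFDerivAt_norm_of_ne_zero hx)
  have hf' : (radialProfile f ∘ fun y => ‖y‖) = f := (funext hf.eq_radialProfile_norm).symm
  rw [hf'] at hcomp
  rw [hcomp.fderiv]
  simp only [smul_apply, coe_innerSL_apply, EuclideanSpace.inner_single_right,
    Real.ringHom_apply, one_mul, smul_eq_mul]
  ring

lemma IsRadial.gradSq_eq (hf : IsRadial f) (hdiff : ∀ x ≠ 0, DifferentiableAt ℝ f x)
    (hx : x ≠ 0) : gradSq f x = deriv (radialProfile f) ‖x‖ ^ 2 := by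
  simp only [gradSq, hf.fderiv_single hdiff hx, Real.norm_eq_abs, sq_abs, mul_pow]
  rw [← Finset.mul_sum, ← EuclideanSpace.real_norm_sq_eq, ← mul_pow,
    div_mul_cancel₀ _ (norm_ne_zero_iff.2 hx)]

lemma IsRadial.fderiv_fderiv_single (hf : IsRadial f) (hdiff : ∀ x ≠ 0, DifferentiableAt ℝ f x)
    (hx : x ≠ 0) {f'' : ℝ} (hf'' : HasDerivAt (deriv (radialProfile f)) f'' ‖x‖)
    (i : Fin (d + 1)) :
    fderiv ℝ (fun y => fderiv ℝ f y (EuclideanSpace.single i 1)) x (EuclideanSpace.single i 1) =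
      (f'' - deriv (radialProfile f) ‖x‖ / ‖x‖) / ‖x‖ ^ 2 * x i ^ 2 +
        deriv (radialProfile f) ‖x‖ / ‖x‖ := by
  have hn : ‖x‖ ≠ 0 := norm_ne_zero_iff.2 hx
  have hgrad : (fun y => fderiv ℝ f y (EuclideanSpace.single i 1)) =ᶠ[𝓝 x]
      fun y => deriv (radialProfile f) ‖y‖ / ‖y‖ * y i := by
    filter_upwards [isOpen_ne.mem_nhds hx] with y hy using hf.fderiv_single hdiff hy i
  have hdiv := (hf''.div (hasDerivAt_id _) hn).comp_hasFDerivAt x (hasFDerivAt_norm_of_ne_zero hx)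
  have hmul : HasFDerivAt (fun y => deriv (radialProfile f) ‖y‖ / ‖y‖ * y i) _ x :=
    hdiv.mul (EuclideanSpace.proj (𝕜 := ℝ) i).hasFDerivAt
  rw [hgrad.fderiv_eq, hmul.fderiv]
  simp only [Function.comp_apply, Pi.div_apply, id_eq, mul_one, add_apply,
    smul_apply, PiLp.proj_apply, PiLp.single_eq_same, smul_eq_mul,
    coe_innerSL_apply, EuclideanSpace.inner_single_right, Real.ringHom_apply, one_mul]
  field_simp
  ring

lemma IsRadial.lapl_eq (hf : IsRadial f) (hdiff : ∀ x ≠ 0, DifferentiableAt ℝ f x)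
    (hx : x ≠ 0) {f'' : ℝ} (hf'' : HasDerivAt (deriv (radialProfile f)) f'' ‖x‖) :
    lapl f x = f'' + d / ‖x‖ * deriv (radialProfile f) ‖x‖ := by
  have hn : ‖x‖ ≠ 0 := norm_ne_zero_iff.2 hx
  simp only [lapl, hf.fderiv_fderiv_single hdiff hx hf'']
  rw [Finset.sum_add_distrib, ← Finset.mul_sum, ← EuclideanSpace.real_norm_sq_eq,
    div_mul_cancel₀ _ (pow_ne_zero 2 hn), Finset.sum_const, Finset.card_fin, nsmul_eq_mul]
  push_cast
  ring

lemma hasRadialLaplacian_deriv_radialProfile (hf : IsRadial f) (hC2 : ContDiff ℝ 2 f) {F : ℝ → ℝ}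
    (hF : ∀ x, lapl f x = F ‖x‖) : HasRadialLaplacian d (deriv (radialProfile f)) F := by
  have hprofile : ContDiff ℝ (1 + 1) (radialProfile f) := by
    unfold radialProfile
    rw [one_add_one_eq_two]
    fun_prop
  have hderiv : ContDiff ℝ 1 (deriv (radialProfile f)) := (contDiff_succ_iff_deriv.1 hprofile).2.2
  refine ⟨hderiv.continuous, hf.deriv_radialProfile_zero, fun r hr => ?_⟩
  have hnorm := (norm_smul_single_zero_one (d := d) r).trans (abs_of_pos hr)
  have hf'' := (hderiv.differentiable one_ne_zero r).hasDerivAt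
  refine hf''.congr_deriv ?_
  have hlapl := hf.lapl_eq (fun x _ => hC2.differentiable two_ne_zero x)
    (smul_single_zero_one_ne_zero hr) (by rwa [hnorm])
  rw [hF, hnorm] at hlapl
  linarith

end RadialCalculus

section RadialIntegral

variable {d : ℕ}

/-- The surface measure of the unit sphere of `ℝ^(d+1)`. -/
def sphereArea (d : ℕ) : ℝ :=
  (d + 1) * (volume : Measure (EuclideanSpace ℝ (Fin (d + 1)))).real (Metric.ball 0 1)

lemma sphereArea_pos (d : ℕ) : 0 < sphereArea d :=
  mul_pos d.cast_add_one_pos <|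
    ENNReal.toReal_pos (Metric.measure_ball_pos _ _ one_pos).ne' measure_ball_lt_top.ne

lemma integrable_iff_of_eq_norm {F : EuclideanSpace ℝ (Fin (d + 1)) → ℝ} {f : ℝ → ℝ}
    (h : ∀ x ≠ 0, F x = f ‖x‖) : Integrable F ↔ Integrable f (radialMeasure d) := by
  rw [integrable_congr ((Measure.ae_ne volume 0).mono h), integrable_fun_norm_addHaar,
    integrable_radialMeasure_iff]
  simp only [finrank_euclideanSpace, Fintype.card_fin, add_tsub_cancel_right, smul_eq_mul]

lemma integral_eq_of_eq_norm {F : EuclideanSpace ℝ (Fin (d + 1)) → ℝ} {f : ℝ → ℝ}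
    (h : ∀ x ≠ 0, F x = f ‖x‖) : ∫ x, F x = sphereArea d * ∫ r, f r ∂radialMeasure d := by
  rw [integral_congr_ae ((Measure.ae_ne volume 0).mono h), integral_fun_norm_addHaar,
    integral_radialMeasure]
  simp only [finrank_euclideanSpace, Fintype.card_fin, add_tsub_cancel_right, smul_eq_mul,
    nsmul_eq_mul, Nat.cast_add, Nat.cast_one, sphereArea, mul_assoc]

end RadialIntegral

section GradSq

variable {N : ℕ} {F : Type*} [NormedAddCommGroup F] [NormedSpace ℝ F]
  {f : EuclideanSpace ℝ (Fin N) → F} {x : EuclideanSpace ℝ (Fin N)}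

lemma gradSq_nonneg (f : EuclideanSpace ℝ (Fin N) → F) (x : EuclideanSpace ℝ (Fin N)) :
    0 ≤ gradSq f x :=
  Finset.sum_nonneg fun _ _ => sq_nonneg _

lemma measurable_gradSq (f : EuclideanSpace ℝ (Fin N) → ℝ) : Measurable (gradSq f) :=
  Finset.measurable_fun_sum _ fun _ _ => (measurable_fderiv_apply_const ℝ f _).norm.pow_const 2

lemma gradSq_clm_comp (L : F →L[ℝ] ℝ) (hf : DifferentiableAt ℝ f x) :
    gradSq (fun y => L (f y)) x =
      ∑ i, L (fderiv ℝ f x (EuclideanSpace.single i 1)) ^ 2 := by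
  have hcomp : HasFDerivAt (fun y => L (f y)) (L.comp (fderiv ℝ f x)) x :=
    L.hasFDerivAt.comp x hf.hasFDerivAt
  simp only [gradSq, hcomp.fderiv, ContinuousLinearMap.comp_apply, Real.norm_eq_abs, sq_abs]

lemma gradSq_clm_comp_le (L : F →L[ℝ] ℝ) (hf : DifferentiableAt ℝ f x) :
    gradSq (fun y => L (f y)) x ≤ ‖L‖ ^ 2 * gradSq f x := by
  rw [gradSq_clm_comp L hf, gradSq, Finset.mul_sum]
  refine Finset.sum_le_sum fun i _ => ?_
  rw [← sq_abs, ← Real.norm_eq_abs, ← mul_pow]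
  exact pow_le_pow_left₀ (norm_nonneg _) (L.le_opNorm _) 2

lemma gradSq_eq_re_add_im {u : EuclideanSpace ℝ (Fin N) → ℂ} (hu : DifferentiableAt ℝ u x) :
    gradSq u x = gradSq (fun y => (u y).re) x + gradSq (fun y => (u y).im) x := by
  have hre := gradSq_clm_comp reCLM hu
  have him := gradSq_clm_comp imCLM hu
  simp only [reCLM_apply, imCLM_apply] at hre him
  rw [hre, him, gradSq, ← Finset.sum_add_distrib]
  refine Finset.sum_congr rfl fun i _ => ?_
  rw [Complex.sq_norm, normSq_apply, sq, sq]

lemma gradSq_le_norm_fderiv_sq (f : EuclideanSpace ℝ (Fin N) → F)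
    (x : EuclideanSpace ℝ (Fin N)) : gradSq f x ≤ N * ‖fderiv ℝ f x‖ ^ 2 := by
  have hle : ∀ i, ‖fderiv ℝ f x (EuclideanSpace.single i 1)‖ ^ 2 ≤ ‖fderiv ℝ f x‖ ^ 2 := fun i => by
    gcongr
    simpa using (fderiv ℝ f x).le_opNorm (EuclideanSpace.single i 1)
  simpa [gradSq] using Finset.sum_le_card_nsmul Finset.univ _ _ fun i _ => hle i

end GradSq

lemma integrable_gradSq_schwartzMap {N : ℕ} (ρ : SchwartzMap (EuclideanSpace ℝ (Fin N)) ℝ) :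
    Integrable (gradSq ρ) := by
  have hderiv := ((SchwartzMap.fderivCLM ℝ _ ℝ ρ).memLp 2 volume).norm.integrable_sq
  refine (hderiv.const_mul (N : ℝ)).mono' (measurable_gradSq _).aestronglyMeasurable ?_
  refine ae_of_all _ fun x => ?_
  rw [Real.norm_of_nonneg (gradSq_nonneg _ _)]
  exact gradSq_le_norm_fderiv_sq ρ x

/-- Radial elements of `H¹(ℝ^N)`, encoded as continuous functions that are differentiable away from
the origin. -/
structure IsRadialH1 {N : ℕ} {F : Type*} [NormedAddCommGroup F] [NormedSpace ℝ F]
    (f : EuclideanSpace ℝ (Fin N) → F) : Prop where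
  isRadial : IsRadial f
  continuous : Continuous f
  differentiableAt : ∀ x ≠ 0, DifferentiableAt ℝ f x
  integrable_norm_sq : Integrable fun x => ‖f x‖ ^ 2
  integrable_gradSq : Integrable fun x => gradSq f x

lemma isRadialH1_schwartzMap {N : ℕ} (ρ : SchwartzMap (EuclideanSpace ℝ (Fin N)) ℝ)
    (hρ : IsRadial ρ) : IsRadialH1 ρ :=
  ⟨hρ, ρ.continuous, fun _ _ => ρ.differentiableAt, (ρ.memLp 2 volume).norm.integrable_sq,
    integrable_gradSq_schwartzMap ρ⟩

namespace IsRadialH1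

variable {d : ℕ}

lemma clm_comp {F : Type*} [NormedAddCommGroup F] [NormedSpace ℝ F]
    {f : EuclideanSpace ℝ (Fin (d + 1)) → F} (hf : IsRadialH1 f) (L : F →L[ℝ] ℝ) :
    IsRadialH1 fun x => L (f x) := by
  have hcont := L.continuous.comp hf.continuous
  refine ⟨fun x y hxy => by rw [hf.isRadial x y hxy], hcont,
    fun x hx => L.differentiableAt.comp x (hf.differentiableAt x hx), ?_, ?_⟩
  · refine (hf.integrable_norm_sq.const_mul (‖L‖ ^ 2)).mono'
      (hcont.norm.pow 2).aestronglyMeasurable (ae_of_all _ fun x => ?_)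
    rw [Real.norm_of_nonneg (sq_nonneg _), ← mul_pow]
    exact pow_le_pow_left₀ (norm_nonneg _) (L.le_opNorm _) 2
  · refine (hf.integrable_gradSq.const_mul (‖L‖ ^ 2)).mono'
      (measurable_gradSq _).aestronglyMeasurable ?_
    filter_upwards [Measure.ae_ne volume 0] with x hx
    rw [Real.norm_of_nonneg (gradSq_nonneg _ _)]
    exact gradSq_clm_comp_le L (hf.differentiableAt x hx)

section Complex

variable {u : EuclideanSpace ℝ (Fin (d + 1)) → ℂ}

lemma re (hu : IsRadialH1 u) : IsRadialH1 fun x => (u x).re := hu.clm_comp reCLM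

lemma im (hu : IsRadialH1 u) : IsRadialH1 fun x => (u x).im := hu.clm_comp imCLM

end Complex

section Profile

variable {f : EuclideanSpace ℝ (Fin (d + 1)) → ℝ}

lemma integrable_sq (hf : IsRadialH1 f) : Integrable fun x => f x ^ 2 := by
  simpa only [Real.norm_eq_abs, sq_abs] using hf.integrable_norm_sq

lemma gradSq_eq (hf : IsRadialH1 f) {x : EuclideanSpace ℝ (Fin (d + 1))} (hx : x ≠ 0) :
    gradSq f x = deriv (radialProfile f) ‖x‖ ^ 2 :=
  hf.isRadial.gradSq_eq hf.differentiableAt hx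

lemma radialProfile_mem (hf : IsRadialH1 f) :
    (radialProfile f, deriv (radialProfile f)) ∈ radialH1 d := by
  have hcont : Continuous (radialProfile f) := hf.continuous.comp (by fun_prop)
  refine ⟨hcont, fun r hr => hasDerivAt_radialProfile hf.differentiableAt hr,
    (memLp_two_iff_integrable_sq hcont.aestronglyMeasurable).2 ?_,
    (memLp_two_iff_integrable_sq (measurable_deriv _).aestronglyMeasurable).2 ?_⟩
  · exact (integrable_iff_of_eq_norm fun x _ => by rw [hf.isRadial.eq_radialProfile_norm x]).1
      hf.integrable_sq
  · exact (integrable_iff_of_eq_norm fun x hx => hf.gradSq_eq hx).1 hf.integrable_gradSq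

/-- The radial profile of `f`, as an element of `radialH1 d`. -/
def profile (hf : IsRadialH1 f) : radialH1 d := ⟨_, hf.radialProfile_mem⟩

lemma integral_mul_eq_l2Form (hf : IsRadialH1 f) (g : radialH1 d) :
    ∫ x, f x * g.1.1 ‖x‖ = sphereArea d * l2Form d hf.profile g := by
  rw [l2Form_apply]
  exact integral_eq_of_eq_norm fun x _ => by rw [hf.isRadial.eq_radialProfile_norm x]; rfl

lemma integral_eq_energyForm (hf : IsRadialH1 f) {V : ℝ → ℝ} (hV : MemLp V ⊤ (radialMeasure d)) :
    ∫ x, (gradSq f x + V ‖x‖ * f x ^ 2) =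
      sphereArea d * energyForm 1 hV hf.profile hf.profile := by
  rw [energyForm_apply]
  refine integral_eq_of_eq_norm fun x hx => ?_
  rw [hf.gradSq_eq hx, hf.isRadial.eq_radialProfile_norm x, one_mul, sq, sq]
  rfl

lemma integral_eq_h1Form (hf : IsRadialH1 f) :
    (∫ x, f x ^ 2) + ∫ x, gradSq f x = sphereArea d * h1Form d hf.profile hf.profile := by
  rw [h1Form, ← hf.integral_eq_energyForm, add_comm,
    ← integral_add hf.integrable_gradSq hf.integrable_sq]
  simp only [one_mul]

end Profile

lemma integral_norm_sq_add_gradSq {u : EuclideanSpace ℝ (Fin (d + 1)) → ℂ} (hu : IsRadialH1 u) :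
    (∫ x, ‖u x‖ ^ 2) + ∫ x, gradSq u x =
      ((∫ x, (u x).re ^ 2) + ∫ x, gradSq (fun y => (u y).re) x) +
        ((∫ x, (u x).im ^ 2) + ∫ x, gradSq (fun y => (u y).im) x) := by
  rw [add_add_add_comm, ← integral_add hu.re.integrable_sq hu.im.integrable_sq,
    ← integral_add hu.re.integrable_gradSq hu.im.integrable_gradSq]
  congr 1
  · simp only [Complex.sq_norm, normSq_apply, ← sq]
  · exact integral_congr_ae <| (Measure.ae_ne volume 0).mono fun x hx =>
      gradSq_eq_re_add_im (hu.differentiableAt x hx)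

end IsRadialH1

lemma eventually_mul_sub_le {E : Type*} {S H T : E → ℝ} {m M ω : ℝ} (hm : 0 < m) (hω : 0 < ω)
    (hH : ∀ g, 0 ≤ H g) (hT : ∀ g, 0 ≤ T g) (h : ∀ g, m * H g ≤ S g + M * T g) :
    ∀ᶠ μ in 𝓝[>] 0, ∀ g, μ * (ω * H g) - 1 / μ * (ω ^ 2 * T g) ≤ ω * S g := by
  have hM : ∀ᶠ μ in 𝓝[>] (0 : ℝ), μ * M < ω := nhdsWithin_le_nhds <|
    (continuous_mul_const M).continuousAt.eventually_lt_const (by simpa using hω)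
  filter_upwards [hM, Ioo_mem_nhdsGT hm] with μ hμM ⟨hμ, hμm⟩ g
  have hH' : μ * H g ≤ m * H g := mul_le_mul_of_nonneg_right hμm.le (hH g)
  have hT' : M * T g ≤ 1 / μ * (ω * T g) := by
    rw [← mul_assoc]
    refine mul_le_mul_of_nonneg_right ?_ (hT g)
    rw [one_div_mul_eq_div, le_div_iff₀ hμ]
    linarith
  linarith [mul_le_mul_of_nonneg_left (show μ * H g - 1 / μ * (ω * T g) ≤ S g by
    linarith [h g]) hω.le]

lemma h1Form_self_nonneg {d : ℕ} (g : radialH1 d) : 0 ≤ h1Form d g g :=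
  integral_nonneg fun r => by
    rw [one_mul, one_mul]
    exact add_nonneg (mul_self_nonneg _) (mul_self_nonneg _)

namespace IsGroundState

variable {d : ℕ} {Q ρ : EuclideanSpace ℝ (Fin (d + 1)) → ℝ}

lemma expDecay_radialProfile (hQ : IsGroundState (d + 1) Q) : ExpDecay (radialProfile Q) := by
  obtain ⟨-, hpos, -, -, C, c, -, hc, hbound⟩ := hQ
  refine ⟨c, hc, IsBigO.of_bound C ?_⟩
  filter_upwards [eventually_ge_atTop 0] with r hr
  rw [Real.norm_of_nonneg (show 0 ≤ radialProfile Q r from (hpos _).le),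
    Real.norm_of_nonneg (Real.exp_pos _).le]
  have hr' := hbound (r • EuclideanSpace.single 0 1)
  rwa [norm_smul_single_zero_one, abs_of_nonneg hr] at hr'

lemma radialGroundState (hQ : IsGroundState (d + 1) Q) :
    RadialGroundState d (4 / (d + 1 : ℕ)) (radialProfile Q) (deriv (radialProfile Q)) := by
  have hexp := hQ.expDecay_radialProfile
  obtain ⟨hsmooth, hpos, hrad, heq, -⟩ := hQ
  refine ⟨by positivity, fun _ => hpos _, fun r => ?_, hexp,
    hasRadialLaplacian_deriv_radialProfile hrad (contDiff_infty.1 hsmooth 2) fun x => ?_⟩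
  · have hdiff : DifferentiableAt ℝ (radialProfile Q) r :=
      (hsmooth.differentiable (by simp) _).comp r (differentiableAt_id.smul_const _)
    exact hdiff.hasDerivAt
  · rw [← IsRadial.eq_radialProfile_norm hrad x]
    have heqx := heq x
    rw [Real.rpow_add (hpos x), Real.rpow_one] at heqx
    linarith

lemma four_div_mul_eq (d : ℕ) : (4 : ℝ) / (d + 1 : ℕ) * (d + 1) = 4 := by
  rw [Nat.cast_succ, div_mul_cancel₀ _ d.cast_add_one_ne_zero]

lemma integral_linearized_eq (hQ : IsGroundState (d + 1) Q) (κ : ℝ)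
    {f : EuclideanSpace ℝ (Fin (d + 1)) → ℝ} (hf : IsRadialH1 f) :
    ∫ x, (gradSq f x + f x ^ 2 - κ * Q x ^ ((4 : ℝ) / (d + 1 : ℕ)) * f x ^ 2) =
      sphereArea d * hQ.radialGroundState.linearizedForm κ hf.profile hf.profile := by
  rw [RadialGroundState.linearizedForm, ← hf.integral_eq_energyForm]
  refine integral_congr_ae (ae_of_all _ fun x => ?_)
  simp only [← IsRadial.eq_radialProfile_norm hQ.2.2.1 x]
  ring

lemma integral_mul_eq_powMul_zero (hQ : IsGroundState (d + 1) Q)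
    {f : EuclideanSpace ℝ (Fin (d + 1)) → ℝ} (hf : IsRadialH1 f) :
    ∫ x, f x * Q x = sphereArea d * l2Form d hf.profile (hQ.radialGroundState.powMul 0) := by
  simp only [← hf.integral_mul_eq_l2Form, RadialGroundState.powMul_apply, pow_zero, one_mul,
    ← IsRadial.eq_radialProfile_norm hQ.2.2.1]

lemma integral_mul_eq_powMul_two (hQ : IsGroundState (d + 1) Q)
    {f : EuclideanSpace ℝ (Fin (d + 1)) → ℝ} (hf : IsRadialH1 f) :
    ∫ x, f x * (‖x‖ ^ 2 * Q x) =
      sphereArea d * l2Form d hf.profile (hQ.radialGroundState.powMul 2) := by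
  simp only [← hf.integral_mul_eq_l2Form, RadialGroundState.powMul_apply,
    ← IsRadial.eq_radialProfile_norm hQ.2.2.1]

lemma linearizedForm_profile_rho (hQ : IsGroundState (d + 1) Q) (hρ : IsRadialH1 ρ)
    (hC2 : ContDiff ℝ 2 ρ)
    (heq : ∀ x, -lapl ρ x + ρ x - (1 + 4 / (d + 1 : ℕ)) * Q x ^ ((4 : ℝ) / (d + 1 : ℕ)) * ρ x =
      ‖x‖ ^ 2 * Q x) (g : radialH1 d) :
    hQ.radialGroundState.linearizedForm (1 + 4 / (d + 1 : ℕ)) g hρ.profile =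
      l2Form d g (hQ.radialGroundState.powMul 2) := by
  refine hQ.radialGroundState.linearizedForm_eq_l2Form_powMul_two ?_ g
  refine hasRadialLaplacian_deriv_radialProfile hρ.isRadial hC2 fun x => ?_
  have hprofile : hρ.profile.1.1 ‖x‖ = ρ x := (hρ.isRadial.eq_radialProfile_norm x).symm
  rw [hprofile, ← IsRadial.eq_radialProfile_norm hQ.2.2.1 x]
  linarith [heq x]

lemma eventually_coercive_re (hQ : IsGroundState (d + 1) Q) {w : radialH1 d}
    (hw : ∀ g, hQ.radialGroundState.linearizedForm (1 + 4 / (d + 1 : ℕ)) g w =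
      l2Form d g (hQ.radialGroundState.powMul 2)) :
    ∀ᶠ μ : ℝ in 𝓝[>] 0, ∀ f, IsRadialH1 f →
      μ * ((∫ x, f x ^ 2) + ∫ x, gradSq f x) -
          1 / μ * ((∫ x, f x * Q x) ^ 2 + (∫ x, f x * (‖x‖ ^ 2 * Q x)) ^ 2) ≤
        ∫ x, (gradSq f x + f x ^ 2 -
          (1 + 4 / (d + 1 : ℕ)) * Q x ^ ((4 : ℝ) / (d + 1 : ℕ)) * f x ^ 2) := by
  obtain ⟨m, hm, M, h⟩ := hQ.radialGroundState.exists_coercive_linearizedForm_one_add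
    (four_div_mul_eq d) hw
  filter_upwards [eventually_mul_sub_le hm (sphereArea_pos d) h1Form_self_nonneg
    (fun g => by positivity) h] with μ hμ f hf
  rw [hQ.integral_linearized_eq _ hf, hQ.integral_mul_eq_powMul_zero hf,
    hQ.integral_mul_eq_powMul_two hf, hf.integral_eq_h1Form, mul_pow, mul_pow, ← mul_add]
  exact hμ hf.profile

lemma eventually_coercive_im (hQ : IsGroundState (d + 1) Q) (hρ : IsRadialH1 ρ)
    (hw : ∀ g, hQ.radialGroundState.linearizedForm (1 + 4 / (d + 1 : ℕ)) g hρ.profile =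
      l2Form d g (hQ.radialGroundState.powMul 2)) :
    ∀ᶠ μ : ℝ in 𝓝[>] 0, ∀ f, IsRadialH1 f →
      μ * ((∫ x, f x ^ 2) + ∫ x, gradSq f x) - 1 / μ * (∫ x, f x * ρ x) ^ 2 ≤
        ∫ x, (gradSq f x + f x ^ 2 - Q x ^ ((4 : ℝ) / (d + 1 : ℕ)) * f x ^ 2) := by
  obtain ⟨m, hm, M, h⟩ := hQ.radialGroundState.exists_coercive_linearizedForm_one
    (four_div_mul_eq d) hw
  filter_upwards [eventually_mul_sub_le hm (sphereArea_pos d) h1Form_self_nonneg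
    (fun g => by positivity) h] with μ hμ f hf
  have hmul : ∫ x, f x * ρ x = sphereArea d * l2Form d hρ.profile hf.profile := by
    rw [(isSymm_l2Form d).eq hρ.profile hf.profile, ← hf.integral_mul_eq_l2Form]
    simp only [hρ.isRadial.eq_radialProfile_norm]
    rfl
  have hform := hQ.integral_linearized_eq 1 hf
  simp only [one_mul] at hform
  rw [hform, hmul, hf.integral_eq_h1Form, mul_pow]
  exact hμ hf.profile

end IsGroundState

end RadialAnalysis

theorem coercivity_general (N : ℕ) (hN : 1 ≤ N) (Q : EuclideanSpace ℝ (Fin N) → ℝ)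
    (hQ : IsGroundState N Q) (ρ : EuclideanSpace ℝ (Fin N) → ℝ) (hρ : IsRadialH1 ρ)
    (hC2 : ContDiff ℝ 2 ρ)
    (heq : ∀ x, -lapl ρ x + ρ x - (1 + 4 / N) * Q x ^ ((4 : ℝ) / N) * ρ x = ‖x‖ ^ 2 * Q x) :
    ∃ μ : ℝ, 0 < μ ∧ ∀ u : EuclideanSpace ℝ (Fin N) → ℂ, IsRadialH1 u →
      (∫ x, (gradSq (fun y => (u y).re) x + (u x).re ^ 2
            - (1 + 4 / N) * Q x ^ ((4 : ℝ) / N) * (u x).re ^ 2)) +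
        (∫ x, (gradSq (fun y => (u y).im) x + (u x).im ^ 2
            - Q x ^ ((4 : ℝ) / N) * (u x).im ^ 2))
      ≥ μ * ((∫ x, ‖u x‖ ^ 2) + ∫ x, gradSq u x)
        - (1 / μ) * ((∫ x, (u x).re * Q x) ^ 2 + (∫ x, (u x).re * (‖x‖ ^ 2 * Q x)) ^ 2
            + (∫ x, (u x).im * ρ x) ^ 2) := by
  obtain ⟨d, rfl⟩ := Nat.exists_eq_add_of_le' hN
  have hw := hQ.linearizedForm_profile_rho hρ hC2 heq
  obtain ⟨μ, ⟨hre, him⟩, hμ⟩ := (((hQ.eventually_coercive_re hw).and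
    (hQ.eventually_coercive_im hρ hw)).and self_mem_nhdsWithin).exists
  refine ⟨μ, hμ, fun u hu => ?_⟩
  rw [hu.integral_norm_sq_add_gradSq]
  linarith [hre _ hu.re, him _ hu.im]

/-- coercivity of the linearized operators `L₊, L₋` on radial `H¹` functions:
there is `μ > 0` with
`(L₊ Re u, Re u)₂ + (L₋ Im u, Im u)₂ ≥ μ‖u‖_{H¹}² − (1/μ)((Re u,Q)₂² + (Re u,|x|²Q)₂² + (Im u,ρ)₂²)`. -/
theorem coercivity (N : ℕ) (hN : 1 ≤ N) (Q : EuclideanSpace ℝ (Fin N) → ℝ)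
    (hQ : IsGroundState N Q) (ρ : SchwartzMap (EuclideanSpace ℝ (Fin N)) ℝ)
    (hρrad : ∀ x y, ‖x‖ = ‖y‖ → ρ x = ρ y)
    (hρ : ∀ x, -lapl (⇑ρ) x + ρ x - (1 + 4 / N) * Q x ^ ((4:ℝ) / N) * ρ x = ‖x‖ ^ 2 * Q x) :
    ∃ μ : ℝ, 0 < μ ∧ ∀ u : EuclideanSpace ℝ (Fin N) → ℂ,
      (∀ x y, ‖x‖ = ‖y‖ → u x = u y) →
      Differentiable ℝ u →
      Integrable (fun x => ‖u x‖ ^ 2) →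
      Integrable (fun x => gradSq u x) →
      (∫ x, (gradSq (fun y => (u y).re) x + (u x).re ^ 2
            - (1 + 4 / N) * Q x ^ ((4:ℝ) / N) * (u x).re ^ 2)) +
        (∫ x, (gradSq (fun y => (u y).im) x + (u x).im ^ 2
            - Q x ^ ((4:ℝ) / N) * (u x).im ^ 2))
      ≥ μ * ((∫ x, ‖u x‖ ^ 2) + ∫ x, gradSq u x)
        - (1 / μ) * ((∫ x, (u x).re * Q x) ^ 2 + (∫ x, (u x).re * (‖x‖ ^ 2 * Q x)) ^ 2
            + (∫ x, (u x).im * ρ x) ^ 2) := by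
  obtain ⟨μ, hμ, h⟩ := coercivity_general N hN Q hQ ρ (isRadialH1_schwartzMap ρ hρrad)
    (ρ.smooth 2) hρ
  exact ⟨μ, hμ, fun u hrad hdiff hsq hgrad =>
    h u ⟨hrad, hdiff.continuous, fun x _ => hdiff x, hsq, hgrad⟩⟩
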